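/- arXiv:2308.15026 — 3 statements merged into one kernel-verified Lean document; each statement's English description precedes it below -/
import Mathlib

section
/- Let ζ ∈ (-1/2, ∞), α ∈ (0,2), and c > 0. Then there exist constants K₁, K₂ > 0 (depending only on ζ, α, c) such that for all τ, z, s > 0: K₁ · p_ζ^{(α)}(τ,z,s) ≤ p_ζ^{(α)}(τ, cz, cs) ≤ K₂ · p_ζ^{(α)}(τ,z,s), and likewise K₁ · p_ζ^{(α)}(τ,z,s) ≤ p_ζ^{(α)}(cτ, z, s) ≤ K₂ · p_ζ^{(α)}(τ,z,s). -/
open MeasureTheory Real Set Filter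

/-- Modified Bessel function of the first kind of order `ν`. -/
noncomputable def besselI (ν x : ℝ) : ℝ :=
  ∑' k : ℕ, (x / 2) ^ (2 * (k : ℝ) + ν) / ((Nat.factorial k : ℝ) * Real.Gamma ((k : ℝ) + ν + 1))

/-- The Bessel heat kernel `p_ζ^{(2)}(t,r,s)`. -/
noncomputable def besselHeat (ζ t r s : ℝ) : ℝ :=
  (r * s) ^ ((1 : ℝ) / 2 - ζ) / (2 * t) * Real.exp (-(r ^ 2 + s ^ 2) / (4 * t)) *
    besselI (ζ - 1 / 2) (r * s / (2 * t))

/-- `σ` is a family of `α/2`-stable subordinator densities. -/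
def IsStableSubordinatorDensity (α : ℝ) (σ : ℝ → ℝ → ℝ) : Prop :=
  (∀ t, 0 < t → ∀ τ, 0 < τ → 0 ≤ σ t τ) ∧
  (∀ t, 0 < t → Measurable (σ t)) ∧
  (∀ t l : ℝ, 0 < t → 0 ≤ l →
    (∫ τ in Ioi (0 : ℝ), Real.exp (-τ * l) * σ t τ) = Real.exp (-t * l ^ (α / 2)))

/-- The `α/2`-subordinated Bessel heat kernel `p_ζ^{(α)}(t,r,s)`. -/
noncomputable def subKernel (ζ : ℝ) (σ : ℝ → ℝ → ℝ) (t r s : ℝ) : ℝ :=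
  ∫ τ in Ioi (0 : ℝ), besselHeat ζ τ r s * σ t τ

/-
After the Gaussian factor `exp (-((r - s) ^ 2 / (4 * t)))` is split off, the Bessel heat kernel is,
as a function of `t`, antitone, while its product with a suitable power `t ^ Q` is monotone; both
facts express bounds on the logarithmic derivative of the Bessel function which come from Turán's
inequality. Integrating such a function `g`, with the Gaussian factor, against the stable density at
time `τ` gives `τ * g(R) * R ^ (-(α / 2))` up to constants, `R = max ((r - s) ^ 2) (τ ^ (2 / α))`.
For this only the Laplace transform of the density is needed: the weight `g(t) exp (-(D / (4 * t)))`
is compared pointwise with combinations of exponentials `exp (-(p * t))` and with powers of `t`.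
Scaling `τ`, or `r` and `s`, by constants changes `R`, and hence `g(R)`, by a bounded factor only.
-/

/-! ### The series of the modified Bessel functions -/

/-- The entire function `Φ_a(y) = ∑ yᵏ / (k! Γ(k + a))`, normalised so that
`I_ν(x) = (x / 2) ^ ν * Φ_{ν+1}((x / 2) ^ 2)` and `Φ_a' = Φ_{a+1}`. -/
noncomputable def besselSeries (a y : ℝ) : ℝ :=
  ∑' k : ℕ, y ^ k / (k.factorial * Gamma (k + a))

theorem pow_mul_Gamma_le_Gamma_natCast_add {a : ℝ} (ha : 0 < a) (k : ℕ) :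
    a ^ k * Gamma a ≤ Gamma (k + a) := by
  induction k with
  | zero => simp
  | succ k ih =>
    have hrec : Gamma ((k + 1 : ℕ) + a) = (k + a) * Gamma (k + a) := by
      rw [← Gamma_add_one (by positivity)]
      push_cast
      ring_nf
    have : 0 < Gamma a := Gamma_pos_of_pos ha
    calc a ^ (k + 1) * Gamma a = a * (a ^ k * Gamma a) := by ring
      _ ≤ (k + a) * Gamma (k + a) := by gcongr; exact le_add_of_nonneg_left k.cast_nonneg
      _ = _ := hrec.symm

namespace besselSeries

variable {a y s : ℝ}

theorem summable (ha : 0 < a) (y : ℝ) :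
    Summable fun k : ℕ => y ^ k / (k.factorial * Gamma (k + a)) := by
  have : 0 < Gamma a := Gamma_pos_of_pos ha
  refine Summable.of_norm_bounded
    ((summable_pow_div_factorial (|y| / a)).mul_right (Gamma a)⁻¹) fun k => ?_
  have hk := pow_mul_Gamma_le_Gamma_natCast_add ha k
  have : 0 < Gamma (k + a) := Gamma_pos_of_pos (by positivity)
  rw [norm_div, norm_pow, norm_eq_abs, norm_of_nonneg (by positivity)]
  calc |y| ^ k / (k.factorial * Gamma (k + a))
      ≤ |y| ^ k / (k.factorial * (a ^ k * Gamma a)) := by gcongr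
    _ = (|y| / a) ^ k / k.factorial * (Gamma a)⁻¹ := by rw [div_pow]; field_simp

theorem pos (ha : 0 < a) (hy : 0 ≤ y) : 0 < besselSeries a y := by
  refine (summable ha y).tsum_pos (fun k => ?_) 0 ?_
  · have := Gamma_pos_of_pos (s := k + a) (by positivity)
    positivity
  · simpa using Gamma_pos_of_pos ha

theorem deriv_term_succ (ha : 0 < a) (y : ℝ) (k : ℕ) :
    (k + 1 : ℕ) * y ^ k / ((k + 1).factorial * Gamma ((k + 1 : ℕ) + a)) =
      y ^ k / (k.factorial * Gamma (k + (a + 1))) := by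
  have := (Gamma_pos_of_pos (s := k + (a + 1)) (by positivity)).ne'
  rw [Nat.factorial_succ, show ((k + 1 : ℕ) : ℝ) + a = k + (a + 1) by push_cast; ring]
  push_cast
  field_simp

theorem summable_deriv (ha : 0 < a) (y : ℝ) :
    Summable fun k : ℕ => k * y ^ (k - 1) / (k.factorial * Gamma (k + a)) := by
  rw [← summable_nat_add_iff 1]
  exact (summable (by positivity : 0 < a + 1) y).congr fun k => (deriv_term_succ ha y k).symm

protected theorem hasDerivAt (ha : 0 < a) (y : ℝ) :
    HasDerivAt (besselSeries a) (besselSeries (a + 1) y) y := by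
  have hbound (k : ℕ) (x : ℝ) (hx : x ∈ Metric.ball (0 : ℝ) (|y| + 1)) :
      ‖k * x ^ (k - 1) / (k.factorial * Gamma (k + a))‖ ≤
        k * (|y| + 1) ^ (k - 1) / (k.factorial * Gamma (k + a)) := by
    have hx : |x| ≤ |y| + 1 := (mem_ball_zero_iff.1 hx).le
    have := Gamma_pos_of_pos (s := k + a) (by positivity)
    rw [norm_div, norm_mul, norm_pow, norm_eq_abs x, RCLike.norm_natCast,
      norm_of_nonneg (by positivity : 0 ≤ k.factorial * Gamma (k + a))]
    gcongr
  have h := hasDerivAt_tsum_of_isPreconnected (summable_deriv ha (|y| + 1)) Metric.isOpen_ball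
    (convex_ball 0 (|y| + 1)).isPreconnected (fun k x _ => (hasDerivAt_pow k x).div_const _)
    hbound (Metric.mem_ball_self (by positivity)) (summable ha 0)
    (mem_ball_zero_iff.2 (lt_add_one |y|))
  refine h.congr_deriv ?_
  rw [(summable_deriv ha y).tsum_eq_zero_add]
  simp only [Nat.cast_zero, zero_mul, zero_div, zero_add]
  exact tsum_congr (deriv_term_succ ha y)

theorem hasDerivAt_add_one (ha : 0 < a) (y : ℝ) :
    HasDerivAt (besselSeries (a + 1)) (besselSeries (a + 2) y) y := by
  simpa only [add_assoc, one_add_one_eq_two] using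
    besselSeries.hasDerivAt (by positivity : 0 < a + 1) y

protected theorem continuous (ha : 0 < a) : Continuous (besselSeries a) :=
  continuous_iff_continuousAt.2 fun y => (besselSeries.hasDerivAt ha y).continuousAt

theorem recurrence (ha : 0 < a) (y : ℝ) :
    besselSeries a y = a * besselSeries (a + 1) y + y * besselSeries (a + 2) y := by
  have h1 := summable (by positivity : 0 < a + 1) y
  have h2 := summable (by positivity : 0 < a + 2) y
  have hG := (Gamma_pos_of_pos ha).ne'
  unfold besselSeries
  rw [(summable ha y).tsum_eq_zero_add, h1.tsum_eq_zero_add, mul_add, add_assoc,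
    ← tsum_mul_left, ← tsum_mul_left,
    ← (((summable_nat_add_iff 1).mpr h1).mul_left a).tsum_add (h2.mul_left y)]
  congr 1
  · simp only [pow_zero, Nat.factorial_zero, Nat.cast_one, Nat.cast_zero, zero_add, one_mul,
      Gamma_add_one ha.ne']
    field_simp
  · refine tsum_congr fun k => ?_
    have hp : 0 < (k : ℝ) + 1 + a := by positivity
    have hG' := (Gamma_pos_of_pos hp).ne'
    rw [Nat.factorial_succ, show (k : ℝ) + (a + 2) = (k + 1 + a) + 1 by ring,
      show ((k + 1 : ℕ) : ℝ) + (a + 1) = (k + 1 + a) + 1 by push_cast; ring,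
      Gamma_add_one hp.ne']
    push_cast
    field_simp
    ring

theorem hasDerivAt_turan (ha : 0 < a) (hy : 0 < y) :
    HasDerivAt (fun x => x ^ (a + 1) *
        (besselSeries (a + 1) x ^ 2 - besselSeries a x * besselSeries (a + 2) x))
      (y ^ a * besselSeries (a + 1) y ^ 2) y := by
  have ha1 : 0 < a + 1 := by positivity
  have h0 := besselSeries.hasDerivAt ha y
  have h1 := hasDerivAt_add_one ha y
  have h2 := hasDerivAt_add_one ha1 y
  have hrec0 := recurrence ha y
  have hrec1 := recurrence ha1 y
  rw [add_assoc, one_add_one_eq_two] at h2 hrec1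
  refine ((hasDerivAt_rpow_const (p := a + 1) (Or.inl hy.ne')).mul
    ((h1.pow 2).sub (h0.mul h2))).congr_deriv ?_
  simp only [Pi.sub_apply, Pi.pow_apply, Pi.mul_apply, add_sub_cancel_right,
    rpow_add_one hy.ne']
  linear_combination y ^ a * (besselSeries a y * hrec1 - besselSeries (a + 1) y * hrec0)

theorem turan (ha : 0 < a) (hy : 0 < y) :
    besselSeries a y * besselSeries (a + 2) y ≤ besselSeries (a + 1) y ^ 2 := by
  set F : ℝ → ℝ := fun x => x ^ (a + 1) *
    (besselSeries (a + 1) x ^ 2 - besselSeries a x * besselSeries (a + 2) x)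
  have hcont : Continuous F := by
    have h0 := besselSeries.continuous ha
    have h1 := besselSeries.continuous (by positivity : 0 < a + 1)
    have h2 := besselSeries.continuous (by positivity : 0 < a + 2)
    have := continuous_rpow_const (by positivity : 0 ≤ a + 1)
    fun_prop
  have hmono : MonotoneOn F (Ici 0) := by
    refine monotoneOn_of_hasDerivWithinAt_nonneg (convex_Ici 0) hcont.continuousOn
      (f' := fun x => x ^ a * besselSeries (a + 1) x ^ 2) (fun x hx => ?_) fun x hx => ?_
    all_goals rw [interior_Ici, mem_Ioi] at hx
    · exact (hasDerivAt_turan ha hx).hasDerivWithinAt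
    · positivity
  have h := hmono self_mem_Ici hy.le hy.le
  simp only [F, zero_rpow (by positivity : a + 1 ≠ 0), zero_mul] at h
  exact sub_nonneg.1 (nonneg_of_mul_nonneg_right h (by positivity))

/- By the recurrence, Turán's inequality is the quadratic inequality `1 ≤ q ^ 2 + (a / s) * q` for
`q = s * Φ_{a+1} / Φ_a`. -/
theorem le_sq_mul_besselSeries_add_one (ha : 0 < a) (hs : 0 < s) :
    (s - a / 2) * besselSeries a (s ^ 2) ≤ s ^ 2 * besselSeries (a + 1) (s ^ 2) := by
  have hturan := turan ha (pow_pos hs 2)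
  have hrec := recurrence ha (s ^ 2)
  have h0 := pos ha (sq_nonneg s)
  have h1 := pos (by positivity : 0 < a + 1) (sq_nonneg s)
  set f₀ := besselSeries a (s ^ 2)
  set f₁ := besselSeries (a + 1) (s ^ 2)
  set f₂ := besselSeries (a + 2) (s ^ 2)
  have hquad : (s * f₀) ^ 2 ≤ (s ^ 2 * f₁) ^ 2 + a * f₀ * (s ^ 2 * f₁) := by
    calc (s * f₀) ^ 2 = s ^ 4 * (f₀ * f₂) + a * f₀ * (s ^ 2 * f₁) := by
          linear_combination s ^ 2 * f₀ * hrec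
      _ ≤ s ^ 4 * f₁ ^ 2 + a * f₀ * (s ^ 2 * f₁) := by gcongr
      _ = _ := by ring
  by_contra! hlt
  have hpos : 0 < s ^ 2 * f₁ := by positivity
  nlinarith [mul_pos ha h0]

theorem sq_mul_besselSeries_add_one_le (ha : 0 < a) (hs : 0 < s) :
    s ^ 2 * besselSeries (a + 1) (s ^ 2) ≤ (s + 1 / (4 * a)) * besselSeries a (s ^ 2) := by
  have hlow := le_sq_mul_besselSeries_add_one (by positivity : 0 < a + 1) hs
  have hrec := recurrence ha (s ^ 2)
  rw [add_assoc, one_add_one_eq_two] at hlow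
  have h0 := pos ha (sq_nonneg s)
  have h1 := pos (by positivity : 0 < a + 1) (sq_nonneg s)
  have h2 := pos (by positivity : 0 < a + 2) (sq_nonneg s)
  set f₀ := besselSeries a (s ^ 2)
  set f₁ := besselSeries (a + 1) (s ^ 2)
  set f₂ := besselSeries (a + 2) (s ^ 2)
  have hshift : (s + (a - 1) / 2) * f₁ ≤ f₀ := by linarith
  have hf₁ : f₁ ≤ f₀ / a := by
    rw [le_div_iff₀ ha]
    nlinarith [sq_nonneg s]
  have hextra : 0 < 1 / (4 * a) * f₀ := by positivity
  rcases le_total 1 a with h | h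
  · nlinarith [mul_le_mul_of_nonneg_left hshift hs.le,
      mul_nonneg (sub_nonneg.2 h) (mul_pos hs h1).le]
  · calc s ^ 2 * f₁ = s * ((s + (a - 1) / 2) * f₁) + (1 - a) / 2 * (s * f₁) := by ring
      _ ≤ s * f₀ + (1 - a) / 2 * (f₀ + (1 - a) / 2 * (f₀ / a)) := by
        have : 0 ≤ (1 - a) / 2 := by linarith
        gcongr
        nlinarith
      _ = (s + (1 - a ^ 2) / (4 * a)) * f₀ := by field_simp; ring
      _ ≤ _ := by gcongr; nlinarith

end besselSeries

/-! ### The Bessel heat kernel without its Gaussian factor -/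

/-- With `e = a`, the function `x ^ a * I_{a-1}(x)`, normalised by its exponential growth and
written in the variable `w = x / 2`; the exponent `e` is left free to express how fast it varies. -/
noncomputable def scaledBessel (a e w : ℝ) : ℝ :=
  w ^ e * (exp (-(2 * w)) * besselSeries a (w ^ 2))

namespace scaledBessel

variable {a w : ℝ}

theorem pos (ha : 0 < a) (e : ℝ) (hw : 0 < w) : 0 < scaledBessel a e w := by
  have := besselSeries.pos ha (sq_nonneg w)
  unfold scaledBessel
  positivity

protected theorem hasDerivAt (ha : 0 < a) (e : ℝ) (hw : 0 < w) :
    HasDerivAt (scaledBessel a e) (w ^ (e - 1) * exp (-(2 * w)) *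
      ((e - 2 * w) * besselSeries a (w ^ 2) + 2 * (w ^ 2 * besselSeries (a + 1) (w ^ 2)))) w := by
  have hexp : HasDerivAt (fun w : ℝ => exp (-(2 * w))) (exp (-(2 * w)) * (-(2 * 1))) w :=
    ((hasDerivAt_id w).const_mul 2).neg.exp
  have hseries : HasDerivAt (fun w : ℝ => besselSeries a (w ^ 2))
      (besselSeries (a + 1) (w ^ 2) * (2 * w)) w := by
    simpa [Function.comp_def] using (besselSeries.hasDerivAt ha (w ^ 2)).comp w (hasDerivAt_pow 2 w)
  refine ((hasDerivAt_rpow_const (p := e) (Or.inl hw.ne')).mul (hexp.mul hseries)).congr_deriv ?_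
  rw [rpow_sub_one hw.ne']
  simp only [Pi.mul_apply]
  field_simp
  ring

protected theorem monotoneOn (ha : 0 < a) : MonotoneOn (scaledBessel a a) (Ioi 0) := by
  refine monotoneOn_of_hasDerivWithinAt_nonneg (convex_Ioi 0)
    (fun w hw => (scaledBessel.hasDerivAt ha a hw).continuousAt.continuousWithinAt)
    (fun w hw => (scaledBessel.hasDerivAt ha a (interior_subset hw)).hasDerivWithinAt)
    fun w hw => ?_
  have hw : 0 < w := interior_subset hw
  exact mul_nonneg (by positivity)
    (by linarith [besselSeries.le_sq_mul_besselSeries_add_one ha hw])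

protected theorem antitoneOn (ha : 0 < a) :
    AntitoneOn (scaledBessel a (-(1 / (2 * a)))) (Ioi 0) := by
  refine antitoneOn_of_hasDerivWithinAt_nonpos (convex_Ioi 0)
    (fun w hw => (scaledBessel.hasDerivAt ha _ hw).continuousAt.continuousWithinAt)
    (fun w hw => (scaledBessel.hasDerivAt ha _ (interior_subset hw)).hasDerivWithinAt)
    fun w hw => ?_
  have hw : 0 < w := interior_subset hw
  have hupper := besselSeries.sq_mul_besselSeries_add_one_le ha hw
  have hcoeff : 2 * (w + 1 / (4 * a)) = 2 * w + 1 / (2 * a) := by field_simp; ring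
  exact mul_nonpos_of_nonneg_of_nonpos (by positivity)
    (by linear_combination 2 * hupper + besselSeries a (w ^ 2) * hcoeff)

end scaledBessel

/-- Positive antitone functions on `(0, ∞)` that decay at most like `t ^ (-Q)`. -/
structure IsSlowlyDecaying (Q : ℝ) (g : ℝ → ℝ) : Prop where
  pos : ∀ t, 0 < t → 0 < g t
  antitoneOn : AntitoneOn g (Ioi 0)
  monotoneOn_rpow_mul : MonotoneOn (fun t => t ^ Q * g t) (Ioi 0)

namespace IsSlowlyDecaying

variable {Q R t : ℝ} {g : ℝ → ℝ}

theorem apply_le_div_rpow_mul (hg : IsSlowlyDecaying Q g) (hR : 0 < R) (ht : R ≤ t) :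
    g R ≤ (t / R) ^ Q * g t := by
  have h := hg.monotoneOn_rpow_mul hR (hR.trans_le ht) ht
  rw [div_rpow (hR.le.trans ht) hR.le, div_mul_eq_mul_div, le_div_iff₀ (by positivity), mul_comm]
  exact h

theorem apply_le_mul_max (hg : IsSlowlyDecaying Q g) (hR : 0 < R) (ht : 0 < t) :
    g t ≤ g R * max 1 ((t / R)⁻¹ ^ Q) := by
  have hgR := hg.pos R hR
  rw [inv_div]
  rcases le_total t R with h | h
  · calc g t ≤ (R / t) ^ Q * g R := hg.apply_le_div_rpow_mul ht h
      _ = g R * (R / t) ^ Q := mul_comm _ _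
      _ ≤ _ := by gcongr; exact le_max_right _ _
  · calc g t ≤ g R * 1 := by simpa using hg.antitoneOn hR ht h
      _ ≤ _ := by gcongr; exact le_max_left _ _

theorem mul_min_le_apply (hg : IsSlowlyDecaying Q g) (hR : 0 < R) (ht : 0 < t) :
    g R * min 1 ((t / R)⁻¹ ^ Q) ≤ g t := by
  have hgR := hg.pos R hR
  rcases le_total t R with h | h
  · calc g R * min 1 ((t / R)⁻¹ ^ Q) ≤ g R * 1 := by gcongr; exact min_le_left _ _
      _ ≤ g t := by simpa using hg.antitoneOn ht hR h
  · calc g R * min 1 ((t / R)⁻¹ ^ Q) ≤ g R * (t / R)⁻¹ ^ Q := by gcongr; exact min_le_right _ _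
      _ ≤ g t := by
        rw [inv_rpow (by positivity), mul_inv_le_iff₀ (by positivity), mul_comm]
        exact hg.apply_le_div_rpow_mul hR h

theorem apply_le_of_le_mul {K : ℝ} (hg : IsSlowlyDecaying Q g) (hR : 0 < R) (ht : 0 < t)
    (hK : 1 ≤ K) (h : R ≤ K * t) : g t ≤ K ^ Q * g R := by
  calc g t ≤ (K * t / t) ^ Q * g (K * t) :=
        hg.apply_le_div_rpow_mul ht (le_mul_of_one_le_left ht.le hK)
    _ = K ^ Q * g (K * t) := by rw [mul_div_cancel_right₀ _ ht.ne']
    _ ≤ K ^ Q * g R := by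
      gcongr
      exact hg.antitoneOn hR (hR.trans_le h) h

theorem mul_rpow_neg {β : ℝ} (hg : IsSlowlyDecaying Q g) (hβ : 0 ≤ β) :
    IsSlowlyDecaying (Q + β) fun t => g t * t ^ (-β) where
  pos t ht := mul_pos (hg.pos t ht) (rpow_pos_of_pos ht _)
  antitoneOn t ht t' ht' h := by
    exact mul_le_mul (hg.antitoneOn ht ht' h) (rpow_le_rpow_of_nonpos ht h (neg_nonpos.2 hβ))
      (rpow_nonneg (le_of_lt ht') _) (hg.pos t ht).le
  monotoneOn_rpow_mul := hg.monotoneOn_rpow_mul.congr fun t (ht : 0 < t) => by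
    simp only [rpow_add ht, rpow_neg ht.le]
    field_simp

end IsSlowlyDecaying

/-- The Bessel heat kernel with parameter `a - 1 / 2` at time `t`, without its Gaussian factor;
`m` is the product of the two space variables. -/
noncomputable def heatFactor (a m t : ℝ) : ℝ :=
  2 * m ^ (-a) * scaledBessel a a (m / (4 * t))

theorem isSlowlyDecaying_heatFactor {a m : ℝ} (ha : 0 < a) (hm : 0 < m) :
    IsSlowlyDecaying (a + 1 / (2 * a)) (heatFactor a m) where
  pos t ht := by
    have := scaledBessel.pos ha a (by positivity : 0 < m / (4 * t))
    unfold heatFactor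
    positivity
  antitoneOn t (ht : 0 < t) t' (ht' : 0 < t') h := by
    unfold heatFactor
    gcongr
    exact scaledBessel.monotoneOn ha (mem_Ioi.2 (by positivity)) (mem_Ioi.2 (by positivity))
      (by gcongr)
  monotoneOn_rpow_mul t (ht : 0 < t) t' (ht' : 0 < t') h := by
    have hfactor (t : ℝ) (ht : 0 < t) : t ^ (a + 1 / (2 * a)) * heatFactor a m t =
        2 * m ^ (-a) * (m / 4) ^ (a + 1 / (2 * a)) *
          scaledBessel a (-(1 / (2 * a))) (m / (4 * t)) := by
      have hw : 0 < m / (4 * t) := by positivity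
      have hsplit : (m / 4) ^ (a + 1 / (2 * a)) =
          t ^ (a + 1 / (2 * a)) * ((m / (4 * t)) ^ a * (m / (4 * t)) ^ (1 / (2 * a))) := by
        rw [← rpow_add hw, ← mul_rpow ht.le hw.le]
        congr 1
        field_simp
      unfold heatFactor scaledBessel
      rw [hsplit, rpow_neg hw.le]
      field_simp
    simp only [hfactor t ht, hfactor t' ht']
    gcongr
    exact scaledBessel.antitoneOn ha (mem_Ioi.2 (by positivity)) (mem_Ioi.2 (by positivity))
      (by gcongr)

theorem heatFactor_mul_mul {a m k t : ℝ} (hm : 0 ≤ m) (hk : 0 < k) :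
    heatFactor a (k * m) (k * t) = k ^ (-a) * heatFactor a m t := by
  unfold heatFactor
  rw [mul_rpow hk.le hm, mul_left_comm 4 k t, mul_div_mul_left _ _ hk.ne']
  ring

theorem besselI_eq_rpow_mul_besselSeries (ν : ℝ) {x : ℝ} (hx : 0 < x) :
    besselI ν x = (x / 2) ^ ν * besselSeries (ν + 1) ((x / 2) ^ 2) := by
  unfold besselI besselSeries
  rw [← tsum_mul_left]
  refine tsum_congr fun k => ?_
  have hpow : (x / 2) ^ (2 * (k : ℝ) + ν) = (x / 2) ^ ν * ((x / 2) ^ 2) ^ k := by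
    rw [add_comm, rpow_add (by positivity), ← pow_mul, ← rpow_natCast (x / 2) (2 * k)]
    push_cast
    rfl
  rw [hpow, mul_div_assoc, add_assoc]

theorem besselHeat_eq_heatFactor_mul_exp (ζ : ℝ) {t r s : ℝ} (ht : 0 < t) (hr : 0 < r)
    (hs : 0 < s) :
    besselHeat ζ t r s =
      heatFactor (ζ + 1 / 2) (r * s) t * exp (-((r - s) ^ 2 / (4 * t))) := by
  have hw : 0 < r * s / (4 * t) := by positivity
  have hhalf : r * s / (2 * t) / 2 = r * s / (4 * t) := by ring
  have hexp : exp (-(r ^ 2 + s ^ 2) / (4 * t)) =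
      exp (-((r - s) ^ 2 / (4 * t))) * exp (-(2 * (r * s / (4 * t)))) := by
    rw [← exp_add]
    ring_nf
  have hspace : (r * s) ^ (1 / 2 - ζ) = (r * s) ^ (-(ζ + 1 / 2)) * (r * s) := by
    rw [← rpow_add_one (by positivity)]
    ring_nf
  have hbessel : (r * s / (4 * t)) ^ (ζ - 1 / 2) =
      (r * s / (4 * t)) ^ (ζ + 1 / 2) / (r * s / (4 * t)) := by
    rw [← rpow_sub_one hw.ne']
    ring_nf
  unfold besselHeat heatFactor scaledBessel
  rw [besselI_eq_rpow_mul_besselSeries _ (by positivity), hhalf, hexp, hspace, hbessel,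
    show ζ - 1 / 2 + 1 = ζ + 1 / 2 by ring]
  field_simp
  norm_num

/-! ### Exponential inequalities -/

theorem sub_mul_exp_neg_le (p q : ℝ) : (q - p) * exp (-q) ≤ exp (-p) - exp (-q) := by
  have h : exp (-p) = exp (q - p) * exp (-q) := by rw [← exp_add]; ring_nf
  rw [h]
  nlinarith [add_one_le_exp (q - p), exp_pos (-q)]

theorem exp_neg_sub_exp_neg_le (p q : ℝ) : exp (-p) - exp (-q) ≤ (q - p) * exp (-p) := by
  linarith [sub_mul_exp_neg_le q p]

theorem rpow_mul_exp_neg_le {P y : ℝ} (hP : 0 < P) (hy : 0 ≤ y) : y ^ P * exp (-y) ≤ P ^ P := by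
  have h : (y / P) ^ P ≤ exp (y / P) ^ P :=
    rpow_le_rpow (by positivity) (by linarith [add_one_le_exp (y / P)]) hP.le
  rw [← exp_mul, div_mul_cancel₀ _ hP.ne', div_rpow hy hP.le, div_le_iff₀ (by positivity)] at h
  rwa [exp_neg, mul_inv_le_iff₀ (exp_pos y), mul_comm]

theorem min_one_le_mul_one_sub_exp_neg {x : ℝ} (hx : 0 ≤ x) :
    min 1 x ≤ exp 1 * (1 - exp (-x)) := by
  have : 0 ≤ min 1 x := le_min zero_le_one hx
  have h : min 1 x * exp (-1) ≤ 1 - exp (-x) := by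
    calc min 1 x * exp (-1) ≤ (min 1 x - 0) * exp (-min 1 x) := by
          rw [sub_zero]
          gcongr
          exact min_le_left _ _
      _ ≤ exp (-0) - exp (-min 1 x) := sub_mul_exp_neg_le 0 _
      _ ≤ 1 - exp (-x) := by
          rw [neg_zero, exp_zero]
          gcongr
          exact min_le_right _ _
  rwa [exp_neg, mul_inv_le_iff₀ (exp_pos 1), mul_comm] at h

theorem exists_max_mul_exp_le_one_sub_exp {Q : ℝ} (hQ : 0 ≤ Q) :
    ∃ C : ℝ, 0 < C ∧ ∀ x : ℝ, 0 < x →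
      max 1 (x⁻¹ ^ Q) * exp (-(x⁻¹ / 4)) ≤ C * (1 - exp (-x)) := by
  set B : ℝ := max 1 (4 ^ (Q + 1) * (Q + 1) ^ (Q + 1))
  have hB : 0 < B := lt_max_of_lt_left one_pos
  refine ⟨B * exp 1, by positivity, fun x hx => ?_⟩
  suffices h : max 1 (x⁻¹ ^ Q) * exp (-(x⁻¹ / 4)) ≤ B * min 1 x by
    rw [mul_assoc]
    exact h.trans (mul_le_mul_of_nonneg_left (min_one_le_mul_one_sub_exp_neg hx.le) hB.le)
  rcases le_total 1 x with h1 | h1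
  · rw [min_eq_left h1, max_eq_left (rpow_le_one (by positivity) (inv_le_one_of_one_le₀ h1) hQ),
      one_mul, mul_one]
    exact (exp_le_one_iff.2 (neg_nonpos.2 (by positivity))).trans (le_max_left _ _)
  · rw [min_eq_right h1, max_eq_right (one_le_rpow ((one_le_inv₀ hx).2 h1) hQ)]
    have hpow : x⁻¹ ^ Q = x * (4 ^ (Q + 1) * (x⁻¹ / 4) ^ (Q + 1)) := by
      rw [← mul_rpow (by norm_num) (by positivity), mul_div_cancel₀ _ (by norm_num),
        rpow_add_one (by positivity)]
      field_simp
    calc x⁻¹ ^ Q * exp (-(x⁻¹ / 4))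
        = x * (4 ^ (Q + 1) * ((x⁻¹ / 4) ^ (Q + 1) * exp (-(x⁻¹ / 4)))) := by rw [hpow]; ring
      _ ≤ x * (4 ^ (Q + 1) * (Q + 1) ^ (Q + 1)) := by
        gcongr
        exact rpow_mul_exp_neg_le (by positivity) (by positivity)
      _ ≤ B * x := by rw [mul_comm]; gcongr; exact le_max_right _ _

theorem exp_neg_le_mul_min {Q x : ℝ} (hQ : 0 < Q) (hx : 0 < x) :
    exp (-x) ≤ max 1 (Q ^ Q) * min 1 (x⁻¹ ^ Q) := by
  rcases min_choice 1 (x⁻¹ ^ Q) with h | h <;> rw [h]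
  · rw [mul_one]
    exact (exp_le_one_iff.2 (neg_nonpos.2 hx.le)).trans (le_max_left _ _)
  · rw [inv_rpow hx.le, le_mul_inv_iff₀ (by positivity), mul_comm]
    exact (rpow_mul_exp_neg_le hQ hx.le).trans (le_max_right _ _)

/-- A combination of exponentials, so that its integral against a density is read off the Laplace
transform, which bounds from below weights that are tiny near `0`. The weight `exp 2 / N` of the
correction term makes it nonpositive for `x ≤ 1 / N`, where such weights are too small to dominate
anything positive and linear. -/
noncomputable def expBump (N x : ℝ) : ℝ :=
  (exp (-x) - exp (-(2 * x))) - exp 2 / N * (exp (-(N * x)) - exp (-(2 * (N * x))))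

theorem expBump_nonpos {N x : ℝ} (hN : 0 < N) (hx : 0 ≤ x) (h : N * x ≤ 1) : expBump N x ≤ 0 := by
  have hmain : exp (-x) - exp (-(2 * x)) ≤ x := by
    have hexp : exp (-x) ≤ 1 := exp_le_one_iff.2 (neg_nonpos.2 hx)
    nlinarith [exp_neg_sub_exp_neg_le x (2 * x)]
  have hcorr : x ≤ exp 2 / N * (exp (-(N * x)) - exp (-(2 * (N * x)))) := by
    calc x = exp 2 / N * (N * x * exp (-2)) := by rw [exp_neg]; field_simp
      _ ≤ exp 2 / N * ((2 * (N * x) - N * x) * exp (-(2 * (N * x)))) := by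
        rw [two_mul, add_sub_cancel_right, ← two_mul]
        gcongr
        linarith
      _ ≤ _ := by gcongr; exact sub_mul_exp_neg_le _ _
  exact sub_nonpos.2 (hmain.trans hcorr)

theorem expBump_le_exp_neg {N x : ℝ} (hN : 0 < N) (hx : 0 ≤ x) : expBump N x ≤ exp (-x) := by
  have hcorr : 0 ≤ exp 2 / N * (exp (-(N * x)) - exp (-(2 * (N * x)))) := by
    refine mul_nonneg (by positivity) (sub_nonneg.2 (exp_le_exp.2 (neg_le_neg ?_)))
    exact le_mul_of_one_le_left (by positivity) one_le_two
  unfold expBump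
  linarith [exp_pos (-(2 * x))]

theorem exists_mul_expBump_le {Q N : ℝ} (hQ : 0 < Q) (hN : 0 < N) :
    ∃ κ : ℝ, 0 < κ ∧ ∀ x : ℝ, 0 < x →
      κ * expBump N x ≤ min 1 (x⁻¹ ^ Q) * exp (-(x⁻¹ / 4)) := by
  set A : ℝ := max 1 (Q ^ Q)
  have hA : 0 < A := lt_max_of_lt_left one_pos
  refine ⟨exp (-(N / 4)) / A, by positivity, fun x hx => ?_⟩
  rcases le_total (N * x) 1 with h | h
  · exact (mul_nonpos_of_nonneg_of_nonpos (by positivity) (expBump_nonpos hN hx.le h)).trans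
      (by positivity)
  · calc exp (-(N / 4)) / A * expBump N x
        ≤ exp (-(N / 4)) / A * (A * min 1 (x⁻¹ ^ Q)) := by
          gcongr
          exact (expBump_le_exp_neg hN hx.le).trans (exp_neg_le_mul_min hQ hx)
      _ = min 1 (x⁻¹ ^ Q) * exp (-(N / 4)) := by field_simp
      _ ≤ _ := by
        gcongr
        exact (inv_le_iff_one_le_mul₀ hx).2 h

/-! ### Stable densities -/

theorem integral_rpow_mul_exp_mul_const {Q t : ℝ} (hQ : 0 < Q) (ht : 0 < t) (b : ℝ) :
    ∫ l in Ioi 0, l ^ (Q - 1) * (exp (-(l * t)) * b) = Gamma Q * (t⁻¹ ^ Q * b) := by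
  have h := integral_rpow_mul_exp_neg_mul_Ioi hQ ht
  simp_rw [← mul_assoc, integral_mul_const, mul_comm _ t, h, one_div]
  ring

/-- `ρ` is the density on `(0, ∞)` of the `β`-stable subordinator at time `τ`, characterised by its
Laplace transform. -/
structure IsStableDensity (β τ : ℝ) (ρ : ℝ → ℝ) : Prop where
  nonneg : ∀ t, 0 < t → 0 ≤ ρ t
  measurable : Measurable ρ
  laplace : ∀ l, 0 ≤ l → ∫ t in Ioi 0, exp (-(l * t)) * ρ t = exp (-(τ * l ^ β))

theorem IsStableSubordinatorDensity.isStableDensity {α τ : ℝ} {σ : ℝ → ℝ → ℝ}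
    (h : IsStableSubordinatorDensity α σ) (hτ : 0 < τ) : IsStableDensity (α / 2) τ (σ τ) where
  nonneg := h.1 τ hτ
  measurable := h.2.1 τ hτ
  laplace l hl := by simpa only [neg_mul, mul_comm l] using h.2.2 τ l hτ hl

namespace IsStableDensity

variable {β τ p q Q : ℝ} {ρ : ℝ → ℝ}

theorem integrableOn_exp_mul (h : IsStableDensity β τ ρ) (hp : 0 ≤ p) :
    IntegrableOn (fun t => exp (-(p * t)) * ρ t) (Ioi 0) :=
  Integrable.of_integral_ne_zero (by rw [h.laplace p hp]; exact (exp_pos _).ne')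

theorem integrableOn (h : IsStableDensity β τ ρ) : IntegrableOn ρ (Ioi 0) := by
  simpa using h.integrableOn_exp_mul le_rfl

theorem integral_eq_one (h : IsStableDensity β τ ρ) (hβ : 0 < β) : ∫ t in Ioi 0, ρ t = 1 := by
  simpa [zero_rpow hβ.ne'] using h.laplace 0 le_rfl

theorem integrableOn_exp_sub_exp_mul (h : IsStableDensity β τ ρ) (hp : 0 ≤ p) (hq : 0 ≤ q) :
    IntegrableOn (fun t => (exp (-(p * t)) - exp (-(q * t))) * ρ t) (Ioi 0) := by
  simp only [sub_mul]
  exact (h.integrableOn_exp_mul hp).sub (h.integrableOn_exp_mul hq)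

theorem integral_exp_sub_exp_mul (h : IsStableDensity β τ ρ) (hp : 0 ≤ p) (hq : 0 ≤ q) :
    ∫ t in Ioi 0, (exp (-(p * t)) - exp (-(q * t))) * ρ t =
      exp (-(τ * p ^ β)) - exp (-(τ * q ^ β)) := by
  simp only [sub_mul]
  rw [integral_sub (h.integrableOn_exp_mul hp) (h.integrableOn_exp_mul hq), h.laplace p hp,
    h.laplace q hq]

theorem integrable_rpow_mul_exp_mul_prod (h : IsStableDensity β τ ρ) (hβ : 0 < β) (hτ : 0 < τ)
    (hQ : 0 < Q) :
    Integrable (Function.uncurry fun t l : ℝ => l ^ (Q - 1) * (exp (-(l * t)) * ρ t))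
      ((volume.restrict (Ioi 0)).prod (volume.restrict (Ioi 0))) := by
  have hρ : Measurable ρ := h.measurable
  have hmeas : Measurable (Function.uncurry fun t l : ℝ =>
      l ^ (Q - 1) * (exp (-(l * t)) * ρ t)) := by
    unfold Function.uncurry
    fun_prop
  rw [integrable_prod_iff' hmeas.aestronglyMeasurable]
  constructor
  · filter_upwards [ae_restrict_mem measurableSet_Ioi] with l hl
    exact (h.integrableOn_exp_mul (le_of_lt hl)).const_mul (l ^ (Q - 1))
  · refine (integrableOn_rpow_mul_exp_neg_mul_rpow (s := Q - 1) (by linarith) hβ hτ).congr ?_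
    filter_upwards [ae_restrict_mem measurableSet_Ioi] with l (hl : 0 < l)
    rw [neg_mul, ← h.laplace l hl.le, ← integral_const_mul]
    refine setIntegral_congr_fun measurableSet_Ioi fun t ht => ?_
    have := h.nonneg t ht
    simp only [Function.uncurry]
    rw [norm_of_nonneg (by positivity)]

theorem integrableOn_inv_rpow_mul (h : IsStableDensity β τ ρ) (hβ : 0 < β) (hτ : 0 < τ)
    (hQ : 0 < Q) : IntegrableOn (fun t => t⁻¹ ^ Q * ρ t) (Ioi 0) := by
  have hG : Gamma Q ≠ 0 := (Gamma_pos_of_pos hQ).ne'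
  refine ((h.integrable_rpow_mul_exp_mul_prod hβ hτ hQ).integral_prod_left.const_mul
    (Gamma Q)⁻¹).congr ?_
  filter_upwards [ae_restrict_mem measurableSet_Ioi] with t ht
  simp only [Function.uncurry]
  rw [integral_rpow_mul_exp_mul_const hQ ht, inv_mul_cancel_left₀ hG]

theorem integral_inv_rpow_mul (h : IsStableDensity β τ ρ) (hβ : 0 < β) (hτ : 0 < τ)
    (hQ : 0 < Q) :
    ∫ t in Ioi 0, t⁻¹ ^ Q * ρ t = τ ^ (-Q / β) * (1 / β * Gamma (Q / β) / Gamma Q) := by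
  have hG : Gamma Q ≠ 0 := (Gamma_pos_of_pos hQ).ne'
  suffices hmul : Gamma Q * ∫ t in Ioi 0, t⁻¹ ^ Q * ρ t =
      τ ^ (-Q / β) * (1 / β) * Gamma (Q / β) by
    rw [← mul_div_assoc, ← mul_assoc, ← hmul, mul_div_cancel_left₀ _ hG]
  calc Gamma Q * ∫ t in Ioi 0, t⁻¹ ^ Q * ρ t
      = ∫ t in Ioi 0, ∫ l in Ioi 0, l ^ (Q - 1) * (exp (-(l * t)) * ρ t) := by
        rw [← integral_const_mul]
        exact (setIntegral_congr_fun measurableSet_Ioi fun t ht =>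
          integral_rpow_mul_exp_mul_const hQ ht (ρ t)).symm
    _ = ∫ l in Ioi 0, ∫ t in Ioi 0, l ^ (Q - 1) * (exp (-(l * t)) * ρ t) :=
        integral_integral_swap (h.integrable_rpow_mul_exp_mul_prod hβ hτ hQ)
    _ = ∫ l in Ioi 0, l ^ (Q - 1) * exp (-τ * l ^ β) :=
        setIntegral_congr_fun measurableSet_Ioi fun l (hl : 0 < l) => by
          simp only [integral_const_mul, h.laplace l hl.le, neg_mul]
    _ = τ ^ (-Q / β) * (1 / β) * Gamma (Q / β) := by
        rw [integral_rpow_mul_exp_neg_mul_rpow hβ (by linarith) hτ, sub_add_cancel]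

end IsStableDensity

theorem mul_rpow_one_div_rpow_neg {β τ : ℝ} (hβ : β ≠ 0) (hτ : 0 < τ) :
    τ * (τ ^ (1 / β)) ^ (-β) = 1 := by
  rw [← rpow_mul hτ.le, mul_neg, one_div_mul_cancel hβ, rpow_neg_one, mul_inv_cancel₀ hτ.ne']

/-- The time at which the subordinated Gaussian weight `exp (-(D / (4 * t)))` is effectively
evaluated: the `β`-stable subordinator at time `τ` has typical size `τ ^ (1 / β)`, while the
Gaussian suppresses times below `D`. -/
noncomputable def subordinationScale (β τ D : ℝ) : ℝ := max D (τ ^ (1 / β))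

theorem le_subordinationScale (β τ D : ℝ) : D ≤ subordinationScale β τ D := le_max_left _ _

theorem rpow_le_subordinationScale (β τ D : ℝ) : τ ^ (1 / β) ≤ subordinationScale β τ D :=
  le_max_right _ _

namespace subordinationScale

variable {β τ D : ℝ}

theorem pos (hτ : 0 < τ) : 0 < subordinationScale β τ D :=
  (rpow_pos_of_pos hτ _).trans_le (rpow_le_subordinationScale β τ D)

theorem mul_rpow_neg_le_one (hβ : 0 < β) (hτ : 0 < τ) :
    τ * subordinationScale β τ D ^ (-β) ≤ 1 := by
  rw [← mul_rpow_one_div_rpow_neg hβ.ne' hτ]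
  exact mul_le_mul_of_nonneg_left (rpow_le_rpow_of_nonpos (rpow_pos_of_pos hτ _)
    (rpow_le_subordinationScale β τ D) (neg_nonpos.2 hβ.le)) hτ.le

theorem le_mul {L k d : ℝ} (hβ : 0 < β) (hτ : 0 < τ) (hD : 0 ≤ D) (hL : 1 ≤ L)
    (hk : L⁻¹ ≤ k) (hd : L⁻¹ ≤ d) :
    subordinationScale β τ D ≤ L ^ max 1 (1 / β) * subordinationScale β (k * τ) (d * D) := by
  have hL0 : 0 < L := by positivity
  have hk0 : 0 < k := (inv_pos.2 hL0).trans_le hk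
  have hd0 : 0 < d := (inv_pos.2 hL0).trans_le hd
  refine max_le ?_ ?_
  · calc D ≤ L * d * D := le_mul_of_one_le_left hD ((inv_le_iff_one_le_mul₀' hL0).1 hd)
      _ = L ^ (1 : ℝ) * (d * D) := by rw [rpow_one, mul_assoc]
      _ ≤ _ := mul_le_mul (rpow_le_rpow_of_exponent_le hL (le_max_left _ _))
        (le_subordinationScale _ _ _) (by positivity) (by positivity)
  · calc τ ^ (1 / β) ≤ (L * k * τ) ^ (1 / β) := by
          gcongr
          exact le_mul_of_one_le_left hτ.le ((inv_le_iff_one_le_mul₀' hL0).1 hk)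
      _ = L ^ (1 / β) * (k * τ) ^ (1 / β) := by
          rw [mul_assoc, mul_rpow hL0.le (by positivity)]
      _ ≤ _ := mul_le_mul (rpow_le_rpow_of_exponent_le hL (le_max_right _ _))
        (rpow_le_subordinationScale _ _ _) (by positivity) (by positivity)

end subordinationScale

/-- The size, up to constants, of `∫ g(t) exp (-(D / (4 * t))) ρ(t) dt` for slowly decaying `g` and
the `β`-stable density `ρ` at time `τ`: the jump density `τ * t ^ (-1 - β)` gives mass
`τ * R ^ (-β)` to times of order `R = subordinationScale β τ D`. -/
noncomputable def subordinationProfile (β τ D : ℝ) (g : ℝ → ℝ) : ℝ :=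
  τ * (g (subordinationScale β τ D) * subordinationScale β τ D ^ (-β))

theorem IsSlowlyDecaying.subordinationProfile_pos {Q β τ : ℝ} {g : ℝ → ℝ}
    (hg : IsSlowlyDecaying Q g) (hτ : 0 < τ) (D : ℝ) : 0 < subordinationProfile β τ D g :=
  have hR := subordinationScale.pos hτ
  mul_pos hτ (mul_pos (hg.pos _ hR) (rpow_pos_of_pos hR _))

/-! ### Two-sided bounds for subordinated integrals -/

theorem IsSlowlyDecaying.apply_mul_exp_le {Q D R t : ℝ} {g : ℝ → ℝ} (hg : IsSlowlyDecaying Q g)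
    (hD : 0 ≤ D) (hR : 0 < R) (ht : 0 < t) :
    g t * exp (-(D / (4 * t))) ≤ g R * (1 + R ^ Q * t⁻¹ ^ Q) := by
  have hgR := hg.pos R hR
  calc g t * exp (-(D / (4 * t))) ≤ g t * 1 :=
        mul_le_mul_of_nonneg_left (exp_le_one_iff.2 (neg_nonpos.2 (by positivity))) (hg.pos t ht).le
    _ ≤ g R * max 1 ((t / R)⁻¹ ^ Q) := by rw [mul_one]; exact hg.apply_le_mul_max hR ht
    _ ≤ g R * (1 + (t / R)⁻¹ ^ Q) := by
        gcongr
        exact max_le_add_of_nonneg zero_le_one (by positivity)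
    _ = g R * (1 + R ^ Q * t⁻¹ ^ Q) := by
        rw [inv_div, div_eq_mul_inv, mul_rpow hR.le (by positivity)]

theorem IsSlowlyDecaying.mul_min_mul_exp_le {Q D R t : ℝ} {g : ℝ → ℝ} (hg : IsSlowlyDecaying Q g)
    (hR : 0 < R) (hDR : D ≤ R) (ht : 0 < t) :
    g R * (min 1 ((t / R)⁻¹ ^ Q) * exp (-((t / R)⁻¹ / 4))) ≤ g t * exp (-(D / (4 * t))) := by
  have hgt := hg.pos t ht
  have hexp : D / (4 * t) ≤ (t / R)⁻¹ / 4 := by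
    rw [inv_div, div_div, mul_comm t]
    gcongr
  rw [← mul_assoc]
  gcongr
  exact hg.mul_min_le_apply hR ht

namespace IsStableDensity

variable {β τ D Q : ℝ} {ρ g : ℝ → ℝ}

theorem integrableOn_one_add_rpow_mul (h : IsStableDensity β τ ρ) (hβ : 0 < β) (hτ : 0 < τ)
    (hQ : 0 < Q) (b R : ℝ) :
    IntegrableOn (fun t => b * (1 + R ^ Q * t⁻¹ ^ Q) * ρ t) (Ioi 0) := by
  refine ((h.integrableOn.add
    ((h.integrableOn_inv_rpow_mul hβ hτ hQ).const_mul (R ^ Q))).const_mul b).congr ?_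
  exact Eventually.of_forall fun t => by simp only [Pi.add_apply]; ring

theorem integrableOn_mul_exp_mul (h : IsStableDensity β τ ρ) (hg : IsSlowlyDecaying Q g)
    (hβ : 0 < β) (hτ : 0 < τ) (hQ : 0 < Q) (hD : 0 ≤ D) :
    IntegrableOn (fun t => g t * exp (-(D / (4 * t))) * ρ t) (Ioi 0) := by
  have hgmeas : AEMeasurable g (volume.restrict (Ioi 0)) :=
    aemeasurable_restrict_of_antitoneOn measurableSet_Ioi hg.antitoneOn
  have hρmeas := h.measurable
  refine (h.integrableOn_one_add_rpow_mul hβ hτ hQ (g 1) 1).mono' (by fun_prop) ?_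
  filter_upwards [ae_restrict_mem measurableSet_Ioi] with t (ht : 0 < t)
  have hgt := hg.pos t ht
  have hρt := h.nonneg t ht
  rw [norm_of_nonneg (by positivity)]
  exact mul_le_mul_of_nonneg_right (hg.apply_mul_exp_le hD one_pos ht) hρt

theorem exists_integral_le_of_rpow_le (hβ : 0 < β) (hQ : 0 < Q) :
    ∃ C : ℝ, 0 < C ∧ ∀ {τ D : ℝ} {ρ g : ℝ → ℝ}, IsStableDensity β τ ρ → IsSlowlyDecaying Q g →
      0 < τ → τ ^ (1 / β) ≤ D →
      ∫ t in Ioi 0, g t * exp (-(D / (4 * t))) * ρ t ≤ C * (τ * (g D * D ^ (-β))) := by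
  obtain ⟨C, hC, hbound⟩ := exists_max_mul_exp_le_one_sub_exp hQ.le
  refine ⟨C, hC, fun {τ D ρ g} h hg hτ hD => ?_⟩
  have hD0 : 0 < D := (rpow_pos_of_pos hτ _).trans_le hD
  have hgD := hg.pos D hD0
  have hdom := h.integrableOn_exp_sub_exp_mul le_rfl (inv_nonneg.2 hD0.le)
  calc ∫ t in Ioi 0, g t * exp (-(D / (4 * t))) * ρ t
      ≤ ∫ t in Ioi 0, g D * C * ((exp (-(0 * t)) - exp (-(D⁻¹ * t))) * ρ t) := by
        refine setIntegral_mono_on (h.integrableOn_mul_exp_mul hg hβ hτ hQ hD0.le)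
          (hdom.const_mul _) measurableSet_Ioi fun t (ht : 0 < t) => ?_
        have hρt := h.nonneg t ht
        have hexp : D / (4 * t) = (t / D)⁻¹ / 4 := by rw [inv_div]; ring
        have hweight : D⁻¹ * t = t / D := by rw [mul_comm, div_eq_mul_inv]
        rw [← mul_assoc, mul_assoc (g D), hexp, hweight, zero_mul, neg_zero, exp_zero]
        refine mul_le_mul_of_nonneg_right ?_ hρt
        calc g t * exp (-((t / D)⁻¹ / 4))
            ≤ g D * max 1 ((t / D)⁻¹ ^ Q) * exp (-((t / D)⁻¹ / 4)) := by
              gcongr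
              exact hg.apply_le_mul_max hD0 ht
          _ ≤ g D * (C * (1 - exp (-(t / D)))) := by
              rw [mul_assoc]
              exact mul_le_mul_of_nonneg_left (hbound (t / D) (by positivity)) hgD.le
    _ = g D * C * (exp (-0) - exp (-(τ * D ^ (-β)))) := by
        rw [integral_const_mul, h.integral_exp_sub_exp_mul le_rfl (inv_nonneg.2 hD0.le),
          zero_rpow hβ.ne', mul_zero, inv_rpow hD0.le, ← rpow_neg hD0.le]
    _ ≤ g D * C * ((τ * D ^ (-β) - 0) * exp (-0)) := by
        gcongr
        exact exp_neg_sub_exp_neg_le _ _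
    _ = C * (τ * (g D * D ^ (-β))) := by rw [neg_zero, exp_zero]; ring

theorem integral_mul_exp_mul_le (h : IsStableDensity β τ ρ) (hg : IsSlowlyDecaying Q g)
    (hβ : 0 < β) (hτ : 0 < τ) (hQ : 0 < Q) (hD : 0 ≤ D) :
    ∫ t in Ioi 0, g t * exp (-(D / (4 * t))) * ρ t ≤
      (1 + 1 / β * Gamma (Q / β) / Gamma Q) * g (τ ^ (1 / β)) := by
  set R : ℝ := τ ^ (1 / β)
  have hR : 0 < R := rpow_pos_of_pos hτ _
  have hmoment : R ^ Q * τ ^ (-Q / β) = 1 := by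
    rw [← rpow_mul hτ.le, ← rpow_add hτ, one_div_mul_eq_div, ← add_div, add_neg_cancel, zero_div,
      rpow_zero]
  calc ∫ t in Ioi 0, g t * exp (-(D / (4 * t))) * ρ t
      ≤ ∫ t in Ioi 0, g R * (1 + R ^ Q * t⁻¹ ^ Q) * ρ t :=
        setIntegral_mono_on (h.integrableOn_mul_exp_mul hg hβ hτ hQ hD)
          (h.integrableOn_one_add_rpow_mul hβ hτ hQ _ _) measurableSet_Ioi fun t (ht : 0 < t) =>
            mul_le_mul_of_nonneg_right (hg.apply_mul_exp_le hD hR ht) (h.nonneg t ht)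
    _ = g R * ((∫ t in Ioi 0, ρ t) + R ^ Q * ∫ t in Ioi 0, t⁻¹ ^ Q * ρ t) := by
        rw [← integral_const_mul (R ^ Q), ← integral_add h.integrableOn
          ((h.integrableOn_inv_rpow_mul hβ hτ hQ).const_mul _), ← integral_const_mul]
        congr with t
        ring
    _ = (1 + 1 / β * Gamma (Q / β) / Gamma Q) * g R := by
        rw [h.integral_eq_one hβ, h.integral_inv_rpow_mul hβ hτ hQ, ← mul_assoc, hmoment]
        ring

theorem exists_integral_le (hβ : 0 < β) (hQ : 0 < Q) :
    ∃ C : ℝ, 0 < C ∧ ∀ {τ D : ℝ} {ρ g : ℝ → ℝ}, IsStableDensity β τ ρ → IsSlowlyDecaying Q g →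
      0 < τ → 0 ≤ D →
      ∫ t in Ioi 0, g t * exp (-(D / (4 * t))) * ρ t ≤
        C * subordinationProfile β τ D g := by
  obtain ⟨C, hC, hlarge⟩ := exists_integral_le_of_rpow_le hβ hQ
  set M : ℝ := 1 + 1 / β * Gamma (Q / β) / Gamma Q
  refine ⟨max C M, lt_max_of_lt_left hC, fun {τ D ρ g} h hg hτ hD => ?_⟩
  have hprofile := hg.subordinationProfile_pos (β := β) hτ D
  rcases le_total (τ ^ (1 / β)) D with hcase | hcase
  · calc _ ≤ C * subordinationProfile β τ D g := by
          simpa only [subordinationProfile, subordinationScale, max_eq_left hcase] using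
            hlarge h hg hτ hcase
      _ ≤ _ := by gcongr; exact le_max_left _ _
  · have heq : subordinationProfile β τ D g = g (τ ^ (1 / β)) := by
      rw [subordinationProfile, subordinationScale, max_eq_right hcase, mul_left_comm,
        mul_rpow_one_div_rpow_neg hβ.ne' hτ, mul_one]
    calc _ ≤ M * subordinationProfile β τ D g := heq ▸ h.integral_mul_exp_mul_le hg hβ hτ hQ hD
      _ ≤ _ := by gcongr; exact le_max_right _ _

end IsStableDensity

theorem exists_exp_two_div_mul_rpow_le {β : ℝ} (hβ : β < 1) :
    ∃ N : ℝ, 0 < N ∧ exp 2 / N * N ^ β ≤ exp (-2) / 2 := by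
  have htend : Tendsto (fun N : ℝ => exp 2 * N ^ (-(1 - β))) atTop (nhds 0) := by
    simpa using (tendsto_rpow_neg_atTop (sub_pos.2 hβ)).const_mul (exp 2)
  obtain ⟨N, hN, hN0⟩ := ((htend.eventually_le_const (by positivity : 0 < exp (-2) / 2)).and
    (eventually_gt_atTop 0)).exists
  refine ⟨N, hN0, ?_⟩
  rwa [neg_sub, rpow_sub_one hN0.ne', mul_div_assoc', mul_div_right_comm] at hN

namespace IsStableDensity

variable {β τ Q R : ℝ} {ρ : ℝ → ℝ}

theorem integrableOn_expBump_mul {N : ℝ} (h : IsStableDensity β τ ρ) (hR : 0 < R) (hN : 0 < N) :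
    IntegrableOn (fun t => expBump N (t / R) * ρ t) (Ioi 0) := by
  have h1 := h.integrableOn_exp_sub_exp_mul
    (by positivity : 0 ≤ R⁻¹) (by positivity : 0 ≤ 2 * R⁻¹)
  have h2 := h.integrableOn_exp_sub_exp_mul
    (by positivity : 0 ≤ N * R⁻¹) (by positivity : 0 ≤ 2 * (N * R⁻¹))
  refine (h1.sub (h2.const_mul (exp 2 / N))).congr (Eventually.of_forall fun t => ?_)
  simp only [expBump, Pi.sub_apply, div_eq_inv_mul t, mul_assoc]
  ring

theorem integral_expBump_mul {N : ℝ} (h : IsStableDensity β τ ρ) (hR : 0 < R) (hN : 0 < N) :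
    ∫ t in Ioi 0, expBump N (t / R) * ρ t =
      (exp (-(τ * R ^ (-β))) - exp (-(2 ^ β * (τ * R ^ (-β))))) - exp 2 / N *
        (exp (-(N ^ β * (τ * R ^ (-β)))) - exp (-(2 ^ β * (N ^ β * (τ * R ^ (-β)))))) := by
  have hincrement {l : ℝ} (hl : 0 ≤ l) :
      ∫ t in Ioi 0, (exp (-(l * t)) - exp (-(2 * l * t))) * ρ t =
        exp (-(τ * l ^ β)) - exp (-(2 ^ β * (τ * l ^ β))) := by
    rw [h.integral_exp_sub_exp_mul hl (by positivity), mul_rpow zero_le_two hl, mul_left_comm τ]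
  have hRpow : R⁻¹ ^ β = R ^ (-β) := by rw [inv_rpow hR.le, rpow_neg hR.le]
  have hNpow : τ * (N * R⁻¹) ^ β = N ^ β * (τ * R ^ (-β)) := by
    rw [mul_rpow hN.le (by positivity), hRpow, mul_left_comm]
  have h1 := h.integrableOn_exp_sub_exp_mul
    (by positivity : 0 ≤ R⁻¹) (by positivity : 0 ≤ 2 * R⁻¹)
  have h2 := h.integrableOn_exp_sub_exp_mul
    (by positivity : 0 ≤ N * R⁻¹) (by positivity : 0 ≤ 2 * (N * R⁻¹))
  rw [← hNpow, ← hRpow, ← hincrement (by positivity), ← hincrement (by positivity),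
    ← integral_const_mul, ← integral_sub h1 (h2.const_mul _)]
  congr with t
  simp only [expBump, div_eq_inv_mul t, mul_assoc]
  ring

theorem le_integral_expBump_mul {N : ℝ} (h : IsStableDensity β τ ρ) (hβ0 : 0 < β)
    (hβ1 : β < 1) (hτ : 0 < τ) (hR : 0 < R) (hτR : τ * R ^ (-β) ≤ 1) (hN : 0 < N)
    (hNβ : exp 2 / N * N ^ β ≤ exp (-2) / 2) :
    (2 ^ β - 1) * (τ * R ^ (-β)) * (exp (-2) / 2) ≤
      ∫ t in Ioi 0, expBump N (t / R) * ρ t := by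
  rw [h.integral_expBump_mul hR hN]
  set y : ℝ := τ * R ^ (-β)
  have : 0 < y := by positivity
  have h2 : (2 : ℝ) ^ β ≤ 2 := by
    simpa using rpow_le_rpow_of_exponent_le one_le_two hβ1.le
  have h1 : 0 ≤ (2 : ℝ) ^ β - 1 := (sub_pos.2 (one_lt_rpow one_lt_two hβ0)).le
  have hmain : (2 ^ β - 1) * y * exp (-2) ≤ exp (-y) - exp (-(2 ^ β * y)) := by
    calc (2 ^ β - 1) * y * exp (-2) ≤ (2 ^ β * y - y) * exp (-(2 ^ β * y)) := by
          rw [← sub_one_mul]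
          gcongr
          nlinarith
      _ ≤ _ := sub_mul_exp_neg_le _ _
  have hcorr : exp 2 / N * (exp (-(N ^ β * y)) - exp (-(2 ^ β * (N ^ β * y)))) ≤
      (2 ^ β - 1) * y * (exp (-2) / 2) := by
    have hexp : exp (-(N ^ β * y)) ≤ 1 := exp_le_one_iff.2 (neg_nonpos.2 (by positivity))
    calc _ ≤ exp 2 / N * ((2 ^ β * (N ^ β * y) - N ^ β * y) * 1) := by
          gcongr
          refine (exp_neg_sub_exp_neg_le _ _).trans ?_
          gcongr
          rw [← sub_one_mul]
          positivity
      _ = (2 ^ β - 1) * y * (exp 2 / N * N ^ β) := by ring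
      _ ≤ _ := by gcongr
  linarith

theorem exists_le_integral (hβ0 : 0 < β) (hβ1 : β < 1) (hQ : 0 < Q) :
    ∃ c : ℝ, 0 < c ∧ ∀ {τ D : ℝ} {ρ g : ℝ → ℝ}, IsStableDensity β τ ρ → IsSlowlyDecaying Q g →
      0 < τ → 0 ≤ D →
      c * subordinationProfile β τ D g ≤
        ∫ t in Ioi 0, g t * exp (-(D / (4 * t))) * ρ t := by
  obtain ⟨N, hN, hNβ⟩ := exists_exp_two_div_mul_rpow_le hβ1
  obtain ⟨κ, hκ, hbound⟩ := exists_mul_expBump_le hQ hN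
  have h2β : 0 < (2 : ℝ) ^ β - 1 := sub_pos.2 (one_lt_rpow one_lt_two hβ0)
  refine ⟨κ * ((2 ^ β - 1) * (exp (-2) / 2)), by positivity, fun {τ D ρ g} h hg hτ hD => ?_⟩
  set R : ℝ := subordinationScale β τ D with hRdef
  have hR : 0 < R := subordinationScale.pos hτ
  have hgR := hg.pos R hR
  calc κ * ((2 ^ β - 1) * (exp (-2) / 2)) * subordinationProfile β τ D g
      = g R * κ * ((2 ^ β - 1) * (τ * R ^ (-β)) * (exp (-2) / 2)) := by
        rw [subordinationProfile, ← hRdef]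
        ring
    _ ≤ g R * κ * ∫ t in Ioi 0, expBump N (t / R) * ρ t := by
        gcongr
        exact h.le_integral_expBump_mul hβ0 hβ1 hτ hR
          (subordinationScale.mul_rpow_neg_le_one hβ0 hτ) hN hNβ
    _ = ∫ t in Ioi 0, g R * κ * (expBump N (t / R) * ρ t) := (integral_const_mul _ _).symm
    _ ≤ ∫ t in Ioi 0, g t * exp (-(D / (4 * t))) * ρ t := by
        refine setIntegral_mono_on ((h.integrableOn_expBump_mul hR hN).const_mul _)
          (h.integrableOn_mul_exp_mul hg hβ0 hτ hQ hD) measurableSet_Ioi fun t (ht : 0 < t) => ?_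
        have hρt := h.nonneg t ht
        calc g R * κ * (expBump N (t / R) * ρ t) = g R * (κ * expBump N (t / R)) * ρ t := by ring
          _ ≤ g R * (min 1 ((t / R)⁻¹ ^ Q) * exp (-((t / R)⁻¹ / 4))) * ρ t := by
              refine mul_le_mul_of_nonneg_right ?_ hρt
              exact mul_le_mul_of_nonneg_left (hbound _ (by positivity)) hgR.le
          _ ≤ g t * exp (-(D / (4 * t))) * ρ t := by
              exact mul_le_mul_of_nonneg_right
                (hg.mul_min_mul_exp_le hR (le_subordinationScale β τ D) ht) hρt

end IsStableDensity

theorem subKernel_eq_integral {ζ τ r s : ℝ} (σ : ℝ → ℝ → ℝ) (hr : 0 < r) (hs : 0 < s) :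
    subKernel ζ σ τ r s =
      ∫ t in Ioi 0, heatFactor (ζ + 1 / 2) (r * s) t * exp (-((r - s) ^ 2 / (4 * t))) * σ τ t :=
  setIntegral_congr_fun measurableSet_Ioi fun t ht => by
    simp only [besselHeat_eq_heatFactor_mul_exp ζ ht hr hs]

/-! ### Scaling of the subordinated Bessel heat kernel -/

theorem exists_subKernel_bounds {ζ α : ℝ} (hζ : -1 / 2 < ζ) (hα0 : 0 < α) (hα2 : α < 2) :
    ∃ A B : ℝ, 0 < A ∧ 0 < B ∧ ∀ σ, IsStableSubordinatorDensity α σ →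
      ∀ τ r s : ℝ, 0 < τ → 0 < r → 0 < s →
        A * subordinationProfile (α / 2) τ ((r - s) ^ 2) (heatFactor (ζ + 1 / 2) (r * s)) ≤
          subKernel ζ σ τ r s ∧
        subKernel ζ σ τ r s ≤
          B * subordinationProfile (α / 2) τ ((r - s) ^ 2) (heatFactor (ζ + 1 / 2) (r * s)) := by
  have hβ0 : 0 < α / 2 := by positivity
  have hβ1 : α / 2 < 1 := by linarith
  have ha : 0 < ζ + 1 / 2 := by linarith
  have hQ : 0 < ζ + 1 / 2 + 1 / (2 * (ζ + 1 / 2)) := by positivity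
  obtain ⟨A, hA, hlower⟩ := IsStableDensity.exists_le_integral hβ0 hβ1 hQ
  obtain ⟨B, hB, hupper⟩ := IsStableDensity.exists_integral_le hβ0 hQ
  refine ⟨A, B, hA, hB, fun σ hσ τ r s hτ hr hs => ?_⟩
  have hg := isSlowlyDecaying_heatFactor ha (mul_pos hr hs)
  have hρ := hσ.isStableDensity hτ
  rw [subKernel_eq_integral σ hr hs]
  exact ⟨hlower hρ hg hτ (sq_nonneg _), hupper hρ hg hτ (sq_nonneg _)⟩

theorem exists_subordinationProfile_mul_le {a β L : ℝ} (ha : 0 < a) (hβ : 0 < β) (hL : 1 ≤ L) :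
    ∃ K : ℝ, 0 < K ∧ ∀ {τ D m k c : ℝ}, 0 < τ → 0 ≤ D → 0 < m → k ∈ Icc L⁻¹ L → c ∈ Icc L⁻¹ L →
      subordinationProfile β (k * τ) (c * D) (heatFactor a (c * m)) ≤
        K * subordinationProfile β τ D (heatFactor a m) := by
  have hL0 : 0 < L := by positivity
  set P : ℝ := L ^ max 1 (1 / β) * L
  have hP : 1 ≤ P := one_le_mul_of_one_le_of_one_le (one_le_rpow hL (by positivity)) hL
  refine ⟨L * (L ^ (a + β) * P ^ (a + 1 / (2 * a) + β)), by positivity,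
    fun {τ D m k c} hτ hD hm ⟨hk, hkL⟩ ⟨hc, hcL⟩ => ?_⟩
  have hk0 : 0 < k := (inv_pos.2 hL0).trans_le hk
  have hc0 : 0 < c := (inv_pos.2 hL0).trans_le hc
  set R : ℝ := subordinationScale β τ D
  set S : ℝ := subordinationScale β (k * τ) (c * D)
  have hR : 0 < R := subordinationScale.pos hτ
  have hS : 0 < S := subordinationScale.pos (mul_pos hk0 hτ)
  have hg := (isSlowlyDecaying_heatFactor ha hm).mul_rpow_neg hβ.le
  have := hg.pos R hR
  have hgS := hg.pos (S / c) (by positivity)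
  have hRS : R ≤ P * (S / c) := by
    calc R ≤ L ^ max 1 (1 / β) * S := subordinationScale.le_mul hβ hτ hD hL hk hc
      _ = L ^ max 1 (1 / β) * c * (S / c) := by rw [mul_assoc, mul_div_cancel₀ _ hc0.ne']
      _ ≤ L ^ max 1 (1 / β) * L * (S / c) := by gcongr
  have hcpow : c ^ (-(a + β)) ≤ L ^ (a + β) := by
    rw [rpow_neg hc0.le, ← inv_rpow hc0.le]
    gcongr
    exact inv_le_of_inv_le₀ hL0 hc
  calc k * τ * (heatFactor a (c * m) S * S ^ (-β))
      = k * τ * (c ^ (-(a + β)) * (heatFactor a m (S / c) * (S / c) ^ (-β))) := by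
        nth_rw 1 2 [← mul_div_cancel₀ S hc0.ne']
        rw [heatFactor_mul_mul hm.le hc0, mul_rpow hc0.le (by positivity), neg_add, rpow_add hc0]
        ring
    _ ≤ L * τ * (L ^ (a + β) * (P ^ (a + 1 / (2 * a) + β) * (heatFactor a m R * R ^ (-β)))) :=
        mul_le_mul (by gcongr) (mul_le_mul hcpow (hg.apply_le_of_le_mul hR (by positivity) hP hRS)
          hgS.le (by positivity)) (by positivity) (by positivity)
    _ = _ := by rw [subordinationProfile]; ring

theorem exists_subKernel_mul_le {ζ α L : ℝ} (hζ : -1 / 2 < ζ) (hα0 : 0 < α) (hα2 : α < 2)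
    (hL : 1 ≤ L) :
    ∃ K : ℝ, 0 < K ∧ ∀ σ, IsStableSubordinatorDensity α σ →
      ∀ k c : ℝ, k ∈ Icc L⁻¹ L → c ∈ Icc L⁻¹ L → ∀ τ r s : ℝ, 0 < τ → 0 < r → 0 < s →
        subKernel ζ σ (k * τ) (c * r) (c * s) ≤ K * subKernel ζ σ τ r s := by
  obtain ⟨A, B, hA, hB, hbounds⟩ := exists_subKernel_bounds hζ hα0 hα2
  obtain ⟨K, hK, hprofile⟩ := exists_subordinationProfile_mul_le
    (by linarith : 0 < ζ + 1 / 2) (half_pos hα0) (one_le_pow₀ hL : 1 ≤ L ^ 2)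
  refine ⟨B * K / A, by positivity, fun σ hσ k c ⟨hk, hkL⟩ ⟨hc, hcL⟩ τ r s hτ hr hs => ?_⟩
  have hL0 : 0 < L := by positivity
  have hk0 : 0 < k := (inv_pos.2 hL0).trans_le hk
  have hc0 : 0 < c := (inv_pos.2 hL0).trans_le hc
  have hLsq : L ≤ L ^ 2 := le_self_pow₀ hL two_ne_zero
  have hkmem : k ∈ Icc (L ^ 2)⁻¹ (L ^ 2) := ⟨(inv_anti₀ hL0 hLsq).trans hk, hkL.trans hLsq⟩
  have hcmem : c ^ 2 ∈ Icc (L ^ 2)⁻¹ (L ^ 2) := by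
    rw [← inv_pow]
    exact ⟨by gcongr, by gcongr⟩
  have hdist : (c * r - c * s) ^ 2 = c ^ 2 * (r - s) ^ 2 := by ring
  have hprod : c * r * (c * s) = c ^ 2 * (r * s) := by ring
  have hupper := (hbounds σ hσ (k * τ) (c * r) (c * s) (by positivity) (by positivity)
    (by positivity)).2
  rw [hdist, hprod] at hupper
  set G : ℝ := subordinationProfile (α / 2) τ ((r - s) ^ 2) (heatFactor (ζ + 1 / 2) (r * s))
  calc subKernel ζ σ (k * τ) (c * r) (c * s)
      ≤ B * (K * G) := hupper.trans (mul_le_mul_of_nonneg_left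
        (hprofile hτ (sq_nonneg _) (mul_pos hr hs) hkmem hcmem) hB.le)
    _ = B * K / A * (A * G) := by field_simp
    _ ≤ B * K / A * subKernel ζ σ τ r s := by
        gcongr
        exact (hbounds σ hσ τ r s hτ hr hs).1

theorem stmt15 (ζ α c : ℝ) (hζ : -1/2 < ζ) (hα0 : 0 < α) (hα2 : α < 2) (hc : 0 < c)
    (σ : ℝ → ℝ → ℝ) (hσ : IsStableSubordinatorDensity α σ) :
    ∃ K₁ K₂ : ℝ, 0 < K₁ ∧ 0 < K₂ ∧
      ∀ τ z s : ℝ, 0 < τ → 0 < z → 0 < s →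
        (K₁ * subKernel ζ σ τ z s ≤ subKernel ζ σ τ (c * z) (c * s) ∧
          subKernel ζ σ τ (c * z) (c * s) ≤ K₂ * subKernel ζ σ τ z s) ∧
        (K₁ * subKernel ζ σ τ z s ≤ subKernel ζ σ (c * τ) z s ∧
          subKernel ζ σ (c * τ) z s ≤ K₂ * subKernel ζ σ τ z s) := by
  have hL : 1 ≤ max c c⁻¹ := by
    rcases le_total 1 c with h | h
    exacts [h.trans (le_max_left _ _), (one_le_inv₀ hc |>.2 h).trans (le_max_right _ _)]
  have h1 : 1 ∈ Icc (max c c⁻¹)⁻¹ (max c c⁻¹) := ⟨inv_le_one_of_one_le₀ hL, hL⟩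
  have hcmem : c ∈ Icc (max c c⁻¹)⁻¹ (max c c⁻¹) :=
    ⟨inv_le_of_inv_le₀ hc (le_max_right _ _), le_max_left _ _⟩
  have hcinv : c⁻¹ ∈ Icc (max c c⁻¹)⁻¹ (max c c⁻¹) :=
    ⟨inv_anti₀ hc (le_max_left _ _), le_max_right _ _⟩
  obtain ⟨K, hK, hscale⟩ := exists_subKernel_mul_le hζ hα0 hα2 hL
  refine ⟨K⁻¹, K, inv_pos.2 hK, hK, fun τ z s hτ hz hs => ⟨⟨?_, ?_⟩, ?_, ?_⟩⟩
  · rw [inv_mul_le_iff₀ hK]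
    simpa [hc.ne'] using
      hscale σ hσ 1 c⁻¹ h1 hcinv τ (c * z) (c * s) hτ (mul_pos hc hz) (mul_pos hc hs)
  · simpa using hscale σ hσ 1 c h1 hcmem τ z s hτ hz hs
  · rw [inv_mul_le_iff₀ hK]
    simpa [hc.ne'] using hscale σ hσ c⁻¹ 1 hcinv h1 (c * τ) z s (mul_pos hc hτ) hz hs
  · simpa using hscale σ hσ c 1 hcmem h1 τ z s hτ hz hs
end

section
/- Let ζ ∈ (-1/2, ∞), α ∈ (0,2], and C₀ > 0. Then there exist constants c > 0 and K > 0 (depending only on ζ, α, C₀) such that for all τ ∈ (0,1], all s ≥ C₀, and all 0 < z ≤ s/2: p_ζ^{(α)}(τ,z,s) ≤ K · p_ζ^{(α)}(1, c, c s). -/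
open MeasureTheory Real Set Filter

/-- `p` is the kernel `p_ζ^{(α)}` for `α ∈ (0,2]`: the Bessel heat kernel itself when `α = 2`,
and the `α/2`-subordinated kernel when `α < 2`. -/
def IsSubordinatedBesselKernel (ζ α : ℝ) (p : ℝ → ℝ → ℝ → ℝ) : Prop :=
  (α = 2 ∧ ∀ t r s : ℝ, p t r s = besselHeat ζ t r s) ∨
  (α < 2 ∧ ∃ σ : ℝ → ℝ → ℝ, IsStableSubordinatorDensity α σ ∧
    ∀ t r s : ℝ, p t r s = subKernel ζ σ t r s)

/-!
Put `a = ζ + 1 / 2` and `φ_b(v) = v ^ (-a) * exp (-b / v)`. Bounding `I_{ζ - 1/2}` by its power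
series shows that `u ↦ p_ζ^{(2)}(u, r, s)` lies below a multiple of `s ^ (-2a) * φ_b(u / s ^ 2)`
for `b = 1 / 32` as soon as `r ≤ s / 2`, and above such a multiple for some larger `b` as soon as
`r ≤ R * s`.

For `α < 2` all that is needed of the stable density is its Laplace transform, in the form
`∫ (1 - exp (-q * u)) * σ_t(u) = 1 - exp (-t * q ^ (α / 2))`. The pointwise bound
`φ_b(v) ≤ D * (1 - exp (-v))` gives `∫ φ_b(q * u) * σ_t(u) ≤ D * t * q ^ (α / 2)`. Conversely
`exp (-v) - exp (-2 * v) ≤ 2 / N * (1 - exp (-N * v)) + D_N * φ_b(v)` for every `N`, and for large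
`N` the first term on the right contributes little because `N ^ (α / 2 - 1)` is small; this gives
the matching lower bound as long as `t * q ^ (α / 2)` stays bounded. With `q = s ^ (-2)` both
kernels are comparable to `t * s ^ (-(2 * ζ + 1 + α))`, and `c = 1` works.

For `α = 2` the left-hand side is `O(exp (-s ^ 2 / 64))` uniformly in `τ ≤ 1`, and `c = 1 / 4` is
chosen so that `p_ζ^{(2)}(1, c, c * s)` has exactly this decay.
-/

open scoped Nat

/-- The entire function `∑ₖ (x / 2) ^ (2 * k) / (k! * Γ(k + a))`, which is `I_{a-1}(x)` with the
factor `(x / 2) ^ (a - 1)` removed. The parameter is `a = ν + 1` rather than the order `ν`, so that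
all the coefficients are positive exactly when `a` is. -/
noncomputable def besselIReg (a x : ℝ) : ℝ :=
  ∑' k : ℕ, (x / 2) ^ (2 * k) / (k ! * Gamma (k + a))

/-- The unnormalised inverse gamma density `v ^ (-a) * exp (-b / v)`. With `a = ζ + 1 / 2` and `b`
comparable to the square of the larger space variable, it bounds the Bessel heat kernel from above
and below as a function of time. -/
noncomputable def invGammaProfile (a b v : ℝ) : ℝ :=
  v ^ (-a) * exp (-(b / v))

section BesselI

variable {a : ℝ}

lemma besselI_eq_rpow_mul_besselIReg (ν : ℝ) {x : ℝ} (hx : 0 < x) :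
    besselI ν x = (x / 2) ^ ν * besselIReg (ν + 1) x := by
  simp only [besselI, besselIReg, ← tsum_mul_left]
  refine tsum_congr fun k => ?_
  rw [rpow_add (by positivity), ← add_assoc, ← Nat.cast_ofNat, ← Nat.cast_mul, rpow_natCast]
  ring

lemma Gamma_add_one_mul_factorial_le (ha : 0 ≤ a) (k : ℕ) :
    Gamma (a + 1) * k ! ≤ Gamma (k + a + 1) := by
  induction k with
  | zero => simp
  | succ k ih =>
    calc Gamma (a + 1) * (k + 1)! = (k + 1) * (Gamma (a + 1) * k !) := by
          push_cast [Nat.factorial_succ]; ring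
      _ ≤ (k + a + 1) * Gamma (k + a + 1) := by
          gcongr
          linarith
      _ = Gamma ((k + 1 : ℕ) + a + 1) := by
          rw [← Gamma_add_one (by positivity)]
          push_cast
          ring_nf

lemma factorial_two_mul_le_four_pow_mul (k : ℕ) : (2 * k)! ≤ 4 ^ k * (k ! * k !) := by
  calc (2 * k)! = k.centralBinom * (k ! * k !) := by
        rw [Nat.centralBinom_eq_two_mul_choose, two_mul, ← mul_assoc,
          Nat.add_choose_mul_factorial_mul_factorial]
    _ ≤ 4 ^ k * (k ! * k !) := by
        gcongr
        exact Nat.centralBinom_le_four_pow k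

lemma besselIReg_term_nonneg (ha : 0 < a) (x : ℝ) (k : ℕ) :
    0 ≤ (x / 2) ^ (2 * k) / (k ! * Gamma (k + a)) := by
  have := Gamma_nonneg_of_nonneg (s := k + a) (by positivity)
  have := (even_two_mul k).pow_nonneg (x / 2)
  positivity

lemma besselIReg_term_le (ha : 0 < a) (x : ℝ) (k : ℕ) :
    (x / 2) ^ (2 * k) / (k ! * Gamma (k + a)) ≤
      (Gamma (a + 1))⁻¹ * ((k + a) * (x ^ (2 * k) / (2 * k)!)) := by
  have : 0 < Gamma (a + 1) := Gamma_pos_of_pos (by positivity)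
  have : 0 < Gamma (k + a) := Gamma_pos_of_pos (by positivity)
  have hfact : ((2 * k)! : ℝ) ≤ 4 ^ k * (k ! * k !) :=
    mod_cast factorial_two_mul_le_four_pow_mul k
  have hΓ : Gamma (a + 1) * k ! ≤ (k + a) * Gamma (k + a) := by
    rw [← Gamma_add_one (by positivity)]
    exact Gamma_add_one_mul_factorial_le ha.le k
  have hcoeff : Gamma (a + 1) * (2 * k)! ≤ (k + a) * (4 ^ k * (k ! * Gamma (k + a))) :=
    calc Gamma (a + 1) * (2 * k)! ≤ Gamma (a + 1) * (4 ^ k * (k ! * k !)) := by gcongr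
      _ = Gamma (a + 1) * k ! * (4 ^ k * k !) := by ring
      _ ≤ (k + a) * Gamma (k + a) * (4 ^ k * k !) := by gcongr
      _ = (k + a) * (4 ^ k * (k ! * Gamma (k + a))) := by ring
  have hpow : (x / 2) ^ (2 * k) = x ^ (2 * k) / 4 ^ k := by
    rw [div_pow, pow_mul 2]
    norm_num
  have hx : 0 ≤ x ^ (2 * k) := (even_two_mul k).pow_nonneg x
  calc (x / 2) ^ (2 * k) / (k ! * Gamma (k + a))
      = x ^ (2 * k) * (1 / (4 ^ k * (k ! * Gamma (k + a)))) := by rw [hpow]; ring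
    _ ≤ x ^ (2 * k) * ((k + a) / (Gamma (a + 1) * (2 * k)!)) := by
        gcongr x ^ (2 * k) * ?_
        rwa [div_le_div_iff₀ (by positivity) (by positivity), one_mul]
    _ = (Gamma (a + 1))⁻¹ * ((k + a) * (x ^ (2 * k) / (2 * k)!)) := by ring

lemma hasSum_natCast_mul_pow_div_factorial_two_mul (x : ℝ) :
    HasSum (fun k : ℕ => (k : ℝ) * (x ^ (2 * k) / (2 * k)!)) (x / 2 * sinh x) := by
  rw [← hasSum_nat_add_iff' 1, Finset.sum_range_one, Nat.cast_zero, zero_mul, sub_zero]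
  refine ((hasSum_sinh x).mul_left (x / 2)).congr_fun fun k => ?_
  rw [show 2 * (k + 1) = 2 * k + 1 + 1 by ring, Nat.factorial_succ]
  push_cast
  field_simp
  ring

lemma hasSum_natCast_add_mul_pow_div_factorial_two_mul (a x : ℝ) :
    HasSum (fun k : ℕ => (k + a) * (x ^ (2 * k) / (2 * k)!)) (x / 2 * sinh x + a * cosh x) := by
  simpa only [add_mul] using
    (hasSum_natCast_mul_pow_div_factorial_two_mul x).add ((hasSum_cosh x).mul_left a)

lemma summable_besselIReg (ha : 0 < a) (x : ℝ) :
    Summable fun k : ℕ => (x / 2) ^ (2 * k) / (k ! * Gamma (k + a)) :=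
  .of_nonneg_of_le (besselIReg_term_nonneg ha x) (besselIReg_term_le ha x)
    ((hasSum_natCast_add_mul_pow_div_factorial_two_mul a x).summable.mul_left _)

lemma measurable_besselIReg (ha : 0 < a) : Measurable (besselIReg a) :=
  measurable_of_tendsto_metrizable (f := fun n x => ∑ k ∈ Finset.range n, _)
    (fun n => Finset.measurable_fun_sum _ fun k _ => by fun_prop)
    (tendsto_pi_nhds.2 fun x => (summable_besselIReg ha x).hasSum.tendsto_sum_nat)

lemma inv_Gamma_le_besselIReg (ha : 0 < a) (x : ℝ) : (Gamma a)⁻¹ ≤ besselIReg a x := by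
  simpa [besselIReg] using
    (summable_besselIReg ha x).le_tsum 0 fun k _ => besselIReg_term_nonneg ha x k

lemma besselIReg_le (ha : 0 < a) {x : ℝ} (hx : 0 ≤ x) :
    besselIReg a x ≤ (Gamma (a + 1))⁻¹ * ((x + a) * exp x) := by
  have : 0 < Gamma (a + 1) := Gamma_pos_of_pos (by positivity)
  have hsinh : 0 ≤ sinh x := sinh_nonneg_iff.2 hx
  have hcosh : 0 < cosh x := cosh_pos x
  calc besselIReg a x ≤ (Gamma (a + 1))⁻¹ * (x / 2 * sinh x + a * cosh x) :=
        hasSum_le (besselIReg_term_le ha x) (summable_besselIReg ha x).hasSum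
          ((hasSum_natCast_add_mul_pow_div_factorial_two_mul a x).mul_left _)
    _ ≤ (Gamma (a + 1))⁻¹ * ((x + a) * exp x) := by
        rw [← cosh_add_sinh]
        gcongr
        nlinarith [mul_nonneg hx hsinh, mul_nonneg hx hcosh.le, mul_nonneg ha.le hsinh]

end BesselI

lemma rpow_mul_exp_neg_mul_le {a b v : ℝ} (ha : 0 ≤ a) (hb : 0 < b) (hv : 0 ≤ v) :
    v ^ a * exp (-(b * v)) ≤ (a / b) ^ a := by
  have h := ProbabilityTheory.rpow_abs_le_mul_exp_abs v ha hb.ne'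
  rw [abs_of_pos hb, abs_of_nonneg hv] at h
  rwa [exp_neg, ← div_eq_mul_inv, div_le_iff₀ (exp_pos _)]

lemma div_one_add_le_one_sub_exp_neg {v : ℝ} (hv : -1 < v) : v / (1 + v) ≤ 1 - exp (-v) := by
  have hpos : 0 < 1 + v := by linarith
  have hexp : exp (-v) ≤ (1 + v)⁻¹ := by
    rw [exp_neg]
    gcongr
    linarith [add_one_le_exp v]
  calc v / (1 + v) = 1 - (1 + v)⁻¹ := by field_simp; ring
    _ ≤ 1 - exp (-v) := by linarith

lemma exp_neg_sub_exp_neg_two_mul_le {v : ℝ} (hv : 0 ≤ v) : exp (-v) - exp (-(2 * v)) ≤ v := by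
  have hle : exp (-v) ≤ 1 := exp_le_one_iff.2 (by linarith)
  calc exp (-v) - exp (-(2 * v)) = exp (-v) * (1 - exp (-v)) := by
        rw [mul_sub, ← exp_add]
        ring_nf
    _ ≤ 1 * v := by
        gcongr
        linarith [add_one_le_exp (-v)]
    _ = v := one_mul v

lemma sub_one_mul_exp_mul_le_exp_sub_exp {c w W : ℝ} (hc : 1 ≤ c) (hw : 0 ≤ w) (hW : w ≤ W) :
    (c - 1) * exp (-(c * W)) * w ≤ exp (-w) - exp (-(c * w)) := by
  have : 0 ≤ c - 1 := sub_nonneg.2 hc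
  calc (c - 1) * exp (-(c * W)) * w = exp (-(c * W)) * ((c - 1) * w) := by ring
    _ ≤ exp (-(c * w)) * (exp ((c - 1) * w) - 1) := by
        gcongr
        linarith [add_one_le_exp ((c - 1) * w)]
    _ = exp (-w) - exp (-(c * w)) := by
        rw [mul_sub, ← exp_add]
        ring_nf

lemma exists_pos_two_div_mul_rpow_le {β ε : ℝ} (hβ : β < 1) (hε : 0 < ε) :
    ∃ N : ℝ, 0 < N ∧ 2 / N * N ^ β ≤ ε := by
  have hlim := tendsto_rpow_neg_atTop (sub_pos.2 hβ)
  obtain ⟨N, hN, hNε⟩ :=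
    ((eventually_gt_atTop 0).and (hlim.eventually_le_const (half_pos hε))).exists
  refine ⟨N, hN, ?_⟩
  rw [neg_sub, rpow_sub_one hN.ne'] at hNε
  calc 2 / N * N ^ β = 2 * (N ^ β / N) := by ring
    _ ≤ ε := by linarith

section InvGammaProfile

variable {a b v : ℝ}

lemma invGammaProfile_nonneg (a b : ℝ) (hv : 0 ≤ v) : 0 ≤ invGammaProfile a b v := by
  unfold invGammaProfile
  positivity

lemma measurable_invGammaProfile (a b : ℝ) : Measurable (invGammaProfile a b) := by
  unfold invGammaProfile
  fun_prop

lemma invGammaProfile_anti_right {b' : ℝ} (a : ℝ) (hb : b ≤ b') (hv : 0 < v) :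
    invGammaProfile a b' v ≤ invGammaProfile a b v := by
  unfold invGammaProfile
  gcongr

lemma invGammaProfile_mul_sq {s : ℝ} (a b : ℝ) (hs : 0 < s) (hv : 0 < v) :
    invGammaProfile a (b * s ^ 2) v = s ^ (-(2 * a)) * invGammaProfile a b (s ^ (-2 : ℝ) * v) := by
  have hpow : (s ^ (-2 : ℝ)) ^ (-a) = s ^ (2 * a) := by
    rw [← rpow_mul hs.le]
    congr 1
    ring
  have hexp : b * s ^ 2 / v = b / (s ^ (-2 : ℝ) * v) := by
    rw [rpow_neg hs.le, rpow_two]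
    field_simp
  have hcancel : s ^ (-(2 * a)) * s ^ (2 * a) = 1 := by
    rw [← rpow_add hs, neg_add_cancel, rpow_zero]
  unfold invGammaProfile
  rw [mul_rpow (by positivity) hv.le, hpow, hexp, ← mul_assoc, ← mul_assoc, hcancel, one_mul]

lemma invGammaProfile_le (ha : 0 ≤ a) (hb : 0 < b) (hv : 0 ≤ v) :
    invGammaProfile a b v ≤ (a / b) ^ a := by
  simpa only [invGammaProfile, rpow_neg hv, inv_rpow hv, div_eq_mul_inv] using
    rpow_mul_exp_neg_mul_le ha hb (inv_nonneg.2 hv)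

lemma invGammaProfile_add_le_of_le_one {b' : ℝ} (ha : 0 ≤ a) (hb : 0 < b) (hb' : 0 ≤ b')
    (hv : 0 < v) (hv1 : v ≤ 1) : invGammaProfile a (b + b') v ≤ (a / b) ^ a * exp (-b') := by
  calc invGammaProfile a (b + b') v = invGammaProfile a b v * exp (-(b' / v)) := by
        unfold invGammaProfile
        rw [mul_assoc, ← exp_add]
        ring_nf
    _ ≤ (a / b) ^ a * exp (-b') := by
        gcongr
        · exact invGammaProfile_le ha hb hv.le
        · exact le_div_self hb' hv hv1

lemma div_mul_invGammaProfile_add_le (a b : ℝ) {b' : ℝ} (hv : 0 < v) :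
    b' / v * invGammaProfile a (b + b') v ≤ invGammaProfile a b v := by
  have hexp : b' / v * exp (-(b' / v)) ≤ 1 := by
    rw [exp_neg, ← div_eq_mul_inv, div_le_one (exp_pos _)]
    linarith [add_one_le_exp (b' / v)]
  calc b' / v * invGammaProfile a (b + b') v
      = invGammaProfile a b v * (b' / v * exp (-(b' / v))) := by
        unfold invGammaProfile
        rw [add_div, neg_add, exp_add]
        ring
    _ ≤ invGammaProfile a b v := mul_le_of_le_one_right (invGammaProfile_nonneg a b hv.le) hexp

lemma exists_invGammaProfile_le_one_sub_exp (ha : 0 ≤ a) (hb : 0 < b) :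
    ∃ D : ℝ, 0 < D ∧ ∀ v : ℝ, 0 < v → invGammaProfile a b v ≤ D * (1 - exp (-v)) := by
  refine ⟨(a / b) ^ a + ((a + 1) / b) ^ (a + 1), by positivity, fun v hv => ?_⟩
  calc invGammaProfile a b v
      = (invGammaProfile a b v + invGammaProfile (a + 1) b v) * (v / (1 + v)) := by
        unfold invGammaProfile
        rw [neg_add, rpow_add hv, rpow_neg_one]
        field_simp
        ring
    _ ≤ ((a / b) ^ a + ((a + 1) / b) ^ (a + 1)) * (1 - exp (-v)) := by
        gcongr
        · exact invGammaProfile_le ha hb hv.le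
        · exact invGammaProfile_le (by positivity) hb hv.le
        · exact div_one_add_le_one_sub_exp_neg (by linarith)

lemma exp_neg_le_mul_invGammaProfile {N : ℝ} (ha : 0 ≤ a) (hb : 0 ≤ b) (hv : 0 < v)
    (hN : 1 ≤ N * v) : exp (-v) ≤ a ^ a * exp (b * N) * invGammaProfile a b v := by
  have hpoly : exp (-v) ≤ a ^ a * v ^ (-a) := by
    have h := rpow_mul_exp_neg_mul_le ha one_pos hv.le
    rw [one_mul, div_one] at h
    rwa [rpow_neg hv.le, ← div_eq_mul_inv, le_div_iff₀' (by positivity)]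
  have hexp : 1 ≤ exp (b * N) * exp (-(b / v)) := by
    rw [← exp_add, one_le_exp_iff, ← sub_eq_add_neg, sub_nonneg, div_le_iff₀ hv, mul_assoc]
    exact le_mul_of_one_le_right hb hN
  calc exp (-v) ≤ a ^ a * v ^ (-a) * 1 := by rwa [mul_one]
    _ ≤ a ^ a * v ^ (-a) * (exp (b * N) * exp (-(b / v))) := by gcongr
    _ = a ^ a * exp (b * N) * invGammaProfile a b v := by unfold invGammaProfile; ring

lemma exp_sub_exp_le_add_mul_invGammaProfile {N : ℝ} (ha : 0 ≤ a) (hb : 0 ≤ b) (hN : 0 < N)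
    (hv : 0 < v) :
    exp (-v) - exp (-(2 * v)) ≤
      2 / N * (1 - exp (-(N * v))) + a ^ a * exp (b * N) * invGammaProfile a b v := by
  have hNv : 0 < N * v := by positivity
  have hφ : 0 ≤ invGammaProfile a b v := invGammaProfile_nonneg a b hv.le
  rcases le_total (N * v) 1 with hle | hge
  · calc exp (-v) - exp (-(2 * v)) ≤ 2 / N * (N * v / (1 + 1)) := by
          refine (exp_neg_sub_exp_neg_two_mul_le hv.le).trans_eq ?_
          field_simp
          norm_num
      _ ≤ 2 / N * (N * v / (1 + N * v)) := by gcongr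
      _ ≤ 2 / N * (1 - exp (-(N * v))) := by
          gcongr
          exact div_one_add_le_one_sub_exp_neg (by linarith)
      _ ≤ _ := le_add_of_nonneg_right (by positivity)
  · have hexp : exp (-(N * v)) ≤ 1 := exp_le_one_iff.2 (by linarith)
    calc exp (-v) - exp (-(2 * v)) ≤ exp (-v) := sub_le_self _ (exp_pos _).le
      _ ≤ a ^ a * exp (b * N) * invGammaProfile a b v :=
          exp_neg_le_mul_invGammaProfile ha hb hv hge
      _ ≤ _ := le_add_of_nonneg_left (mul_nonneg (by positivity) (sub_nonneg.2 hexp))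

end InvGammaProfile

section BesselHeat

variable {ζ u r s : ℝ}

lemma besselHeat_eq (ζ : ℝ) (hu : 0 < u) (hr : 0 < r) (hs : 0 < s) :
    besselHeat ζ u r s = 4 ^ (-ζ) * invGammaProfile (ζ + 1 / 2) ((r ^ 2 + s ^ 2) / 4) u *
      besselIReg (ζ + 1 / 2) (r * s / (2 * u)) := by
  have hrs : 0 < r * s := by positivity
  have hprefactor : (r * s) ^ (1 / 2 - ζ) / (2 * u) * (r * s / (2 * u) / 2) ^ (ζ - 1 / 2) =
      4 ^ (-ζ) * u ^ (-(ζ + 1 / 2)) := by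
    have h4 : (4 : ℝ) ^ (-ζ) = 4 ^ (-(ζ - 1 / 2)) / 2 := by
      rw [show -ζ = -(ζ - 1 / 2) - 1 / 2 by ring, rpow_sub (by norm_num), ← sqrt_eq_rpow,
        show (4 : ℝ) = 2 ^ 2 by norm_num, sqrt_sq (by norm_num)]
    rw [h4, show r * s / (2 * u) / 2 = r * s / (4 * u) by ring, div_rpow hrs.le (by positivity),
      mul_rpow (by norm_num) hu.le, show 1 / 2 - ζ = -(ζ - 1 / 2) by ring,
      show -(ζ + 1 / 2) = -(ζ - 1 / 2) - 1 by ring, rpow_sub_one hu.ne', rpow_neg hrs.le,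
      rpow_neg (by norm_num), rpow_neg hu.le]
    field_simp
  calc besselHeat ζ u r s
      = (r * s) ^ (1 / 2 - ζ) / (2 * u) * (r * s / (2 * u) / 2) ^ (ζ - 1 / 2) *
          exp (-((r ^ 2 + s ^ 2) / 4 / u)) * besselIReg (ζ + 1 / 2) (r * s / (2 * u)) := by
        unfold besselHeat
        rw [besselI_eq_rpow_mul_besselIReg _ (by positivity)]
        ring_nf
    _ = _ := by
        rw [hprefactor, invGammaProfile]
        ring

lemma le_besselHeat (hζ : -1 / 2 < ζ) (hu : 0 < u) (hr : 0 < r) (hs : 0 < s) :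
    4 ^ (-ζ) * (Gamma (ζ + 1 / 2))⁻¹ * invGammaProfile (ζ + 1 / 2) ((r ^ 2 + s ^ 2) / 4) u ≤
      besselHeat ζ u r s := by
  have := invGammaProfile_nonneg (ζ + 1 / 2) ((r ^ 2 + s ^ 2) / 4) hu.le
  rw [besselHeat_eq ζ hu hr hs, mul_right_comm]
  gcongr
  exact inv_Gamma_le_besselIReg (by linarith) _

lemma besselHeat_nonneg (hζ : -1 / 2 < ζ) (hu : 0 < u) (hr : 0 < r) (hs : 0 < s) :
    0 ≤ besselHeat ζ u r s := by
  have := Gamma_nonneg_of_nonneg (s := ζ + 1 / 2) (by linarith)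
  have := invGammaProfile_nonneg (ζ + 1 / 2) ((r ^ 2 + s ^ 2) / 4) hu.le
  exact le_trans (by positivity) (le_besselHeat hζ hu hr hs)

lemma besselHeat_le (hζ : -1 / 2 < ζ) (hu : 0 < u) (hr : 0 < r) (hs : 0 < s) :
    besselHeat ζ u r s ≤ 4 ^ (-ζ) * (Gamma (ζ + 1 / 2 + 1))⁻¹ *
      ((r * s / (2 * u) + (ζ + 1 / 2)) * invGammaProfile (ζ + 1 / 2) ((r - s) ^ 2 / 4) u) := by
  set a := ζ + 1 / 2 with ha
  set x := r * s / (2 * u) with hx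
  have := invGammaProfile_nonneg a ((r ^ 2 + s ^ 2) / 4) hu.le
  have hsq : invGammaProfile a ((r ^ 2 + s ^ 2) / 4) u * exp x =
      invGammaProfile a ((r - s) ^ 2 / 4) u := by
    unfold invGammaProfile
    rw [mul_assoc, ← exp_add, hx]
    ring_nf
  calc besselHeat ζ u r s
      = 4 ^ (-ζ) * invGammaProfile a ((r ^ 2 + s ^ 2) / 4) u * besselIReg a x :=
        besselHeat_eq ζ hu hr hs
    _ ≤ 4 ^ (-ζ) * invGammaProfile a ((r ^ 2 + s ^ 2) / 4) u *
          ((Gamma (a + 1))⁻¹ * ((x + a) * exp x)) := by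
        gcongr
        exact besselIReg_le (by linarith) (by positivity)
    _ = _ := by
        rw [← hsq]
        ring

lemma aemeasurable_besselHeat (hζ : -1 / 2 < ζ) (hr : 0 < r) (hs : 0 < s) :
    AEMeasurable (fun u => besselHeat ζ u r s) (volume.restrict (Ioi 0)) := by
  have hprofile := measurable_invGammaProfile (ζ + 1 / 2) ((r ^ 2 + s ^ 2) / 4)
  have hbessel : Measurable fun u => besselIReg (ζ + 1 / 2) (r * s / (2 * u)) :=
    (measurable_besselIReg (by linarith)).comp (by fun_prop)
  refine ((hprofile.const_mul (4 ^ (-ζ))).mul hbessel).aemeasurable.congr ?_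
  filter_upwards [ae_restrict_mem measurableSet_Ioi] with u hu
  exact (besselHeat_eq ζ hu hr hs).symm

lemma exists_besselHeat_le_of_le_half (hζ : -1 / 2 < ζ) :
    ∃ C : ℝ, 0 < C ∧ ∀ u z s : ℝ, 0 < u → 0 < z → 0 < s → z ≤ s / 2 →
      besselHeat ζ u z s ≤ C * invGammaProfile (ζ + 1 / 2) (1 / 32 * s ^ 2) u := by
  have ha : 0 < ζ + 1 / 2 := by linarith
  set a := ζ + 1 / 2
  have : 0 < Gamma (a + 1) := Gamma_pos_of_pos (by positivity)
  refine ⟨4 ^ (-ζ) * (Gamma (a + 1))⁻¹ * (8 + a), by positivity, fun u z s hu hz hs hzs => ?_⟩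
  have hb : 1 / 32 * s ^ 2 + 1 / 32 * s ^ 2 ≤ (z - s) ^ 2 / 4 := by nlinarith
  have hx : z * s / (2 * u) ≤ 8 * (1 / 32 * s ^ 2 / u) := by
    rw [div_le_iff₀ (by positivity)]
    field_simp
    linarith
  set b := 1 / 32 * s ^ 2
  have hφ := invGammaProfile_anti_right a hb hu
  have := invGammaProfile_nonneg a ((z - s) ^ 2 / 4) hu.le
  have := invGammaProfile_nonneg a (b + b) hu.le
  refine (besselHeat_le hζ hu hz hs).trans ?_
  rw [mul_assoc (4 ^ (-ζ) * _)]
  refine mul_le_mul_of_nonneg_left ?_ (by positivity)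
  calc (z * s / (2 * u) + a) * invGammaProfile a ((z - s) ^ 2 / 4) u
      ≤ (8 * (b / u) + a) * invGammaProfile a (b + b) u := by gcongr
    _ = 8 * (b / u * invGammaProfile a (b + b) u) + a * invGammaProfile a (b + b) u := by ring
    _ ≤ 8 * invGammaProfile a b u + a * invGammaProfile a b u := by
        gcongr
        · exact div_mul_invGammaProfile_add_le a b hu
        · exact invGammaProfile_anti_right a (le_add_of_nonneg_left (by positivity)) hu
    _ = (8 + a) * invGammaProfile a b u := by ring

lemma exists_besselHeat_le_besselHeat_one {C₀ : ℝ} (hζ : -1 / 2 < ζ) (hC₀ : 0 < C₀) :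
    ∃ K : ℝ, 0 < K ∧ ∀ τ z s : ℝ, 0 < τ → τ ≤ 1 → C₀ ≤ s → 0 < z → z ≤ s / 2 →
      besselHeat ζ τ z s ≤ K * besselHeat ζ 1 (1 / 4) (1 / 4 * s) := by
  have ha : 0 < ζ + 1 / 2 := by linarith
  obtain ⟨C, hC, hupper⟩ := exists_besselHeat_le_of_le_half hζ
  have := Gamma_pos_of_pos ha
  set a := ζ + 1 / 2
  set κ := 4 ^ (-ζ) * (Gamma a)⁻¹
  have hκ : 0 < κ := by positivity
  set E := (a / (1 / 64 * C₀ ^ 2)) ^ a with hE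
  refine ⟨C * E * exp (1 / 64) / κ, by positivity, fun τ z s hτ hτ1 hs hz hzs => ?_⟩
  have hs0 : 0 < s := hC₀.trans_le hs
  have hprofile : invGammaProfile a (1 / 32 * s ^ 2) τ ≤ E * exp (-(1 / 64 * s ^ 2)) :=
    calc invGammaProfile a (1 / 32 * s ^ 2) τ
        = invGammaProfile a (1 / 64 * s ^ 2 + 1 / 64 * s ^ 2) τ := by ring_nf
      _ ≤ (a / (1 / 64 * s ^ 2)) ^ a * exp (-(1 / 64 * s ^ 2)) :=
          invGammaProfile_add_le_of_le_one ha.le (by positivity) (by positivity) hτ hτ1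
      _ ≤ E * exp (-(1 / 64 * s ^ 2)) := by
          rw [hE]
          gcongr
  have hlower : κ * exp (-(1 / 64 + 1 / 64 * s ^ 2)) ≤ besselHeat ζ 1 (1 / 4) (1 / 4 * s) := by
    convert le_besselHeat hζ one_pos (by norm_num : (0 : ℝ) < 1 / 4)
      (by positivity : 0 < 1 / 4 * s) using 2
    rw [invGammaProfile, one_rpow]
    ring_nf
  calc besselHeat ζ τ z s ≤ C * invGammaProfile a (1 / 32 * s ^ 2) τ := hupper τ z s hτ hz hs0 hzs
    _ ≤ C * (E * exp (-(1 / 64 * s ^ 2))) := by gcongr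
    _ = C * E * exp (1 / 64) / κ * (κ * exp (-(1 / 64 + 1 / 64 * s ^ 2))) := by
        rw [show -(1 / 64 * s ^ 2) = 1 / 64 + -(1 / 64 + 1 / 64 * s ^ 2) by ring, exp_add]
        field_simp
    _ ≤ C * E * exp (1 / 64) / κ * besselHeat ζ 1 (1 / 4) (1 / 4 * s) := by gcongr

end BesselHeat

namespace IsStableSubordinatorDensity

variable {α t q a b : ℝ} {σ : ℝ → ℝ → ℝ}

lemma nonneg (hσ : IsStableSubordinatorDensity α σ) (ht : 0 < t) {u : ℝ} (hu : 0 < u) :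
    0 ≤ σ t u :=
  hσ.1 t ht u hu

lemma measurable (hσ : IsStableSubordinatorDensity α σ) (ht : 0 < t) : Measurable (σ t) :=
  hσ.2.1 t ht

lemma integral_exp_mul (hσ : IsStableSubordinatorDensity α σ) (ht : 0 < t) (hq : 0 ≤ q) :
    ∫ u in Ioi 0, exp (-u * q) * σ t u = exp (-(t * q ^ (α / 2))) := by
  rw [hσ.2.2 t q ht hq, neg_mul]

lemma integrableOn_exp_mul (hσ : IsStableSubordinatorDensity α σ) (ht : 0 < t) (hq : 0 ≤ q) :
    IntegrableOn (fun u => exp (-u * q) * σ t u) (Ioi 0) :=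
  .of_integral_ne_zero (by rw [hσ.integral_exp_mul ht hq]; exact (exp_pos _).ne')

lemma integrableOn (hσ : IsStableSubordinatorDensity α σ) (ht : 0 < t) :
    IntegrableOn (σ t) (Ioi 0) := by
  simpa using hσ.integrableOn_exp_mul ht le_rfl

lemma integral_eq_one (hσ : IsStableSubordinatorDensity α σ) (hα : α ≠ 0) (ht : 0 < t) :
    ∫ u in Ioi 0, σ t u = 1 := by
  simpa [zero_rpow (div_ne_zero hα two_ne_zero)] using hσ.integral_exp_mul ht le_rfl

lemma integrableOn_one_sub_exp_mul (hσ : IsStableSubordinatorDensity α σ) (ht : 0 < t)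
    (hq : 0 ≤ q) : IntegrableOn (fun u => (1 - exp (-u * q)) * σ t u) (Ioi 0) := by
  simp only [sub_mul, one_mul]
  exact (hσ.integrableOn ht).sub (hσ.integrableOn_exp_mul ht hq)

lemma integral_one_sub_exp_mul (hσ : IsStableSubordinatorDensity α σ) (hα : α ≠ 0) (ht : 0 < t)
    (hq : 0 ≤ q) :
    ∫ u in Ioi 0, (1 - exp (-u * q)) * σ t u = 1 - exp (-(t * q ^ (α / 2))) := by
  simp only [sub_mul, one_mul]
  rw [integral_sub (hσ.integrableOn ht) (hσ.integrableOn_exp_mul ht hq),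
    hσ.integral_eq_one hα ht, hσ.integral_exp_mul ht hq]

lemma integrable_prod_rpow_mul_exp_mul (hσ : IsStableSubordinatorDensity α σ) (hα : 0 < α)
    (ht : 0 < t) (ha : 0 < a) :
    Integrable (fun x : ℝ × ℝ => x.2 ^ (a - 1) * (exp (-x.1 * x.2) * σ t x.1))
      ((volume.restrict (Ioi 0)).prod (volume.restrict (Ioi 0))) := by
  have hσt := hσ.measurable ht
  have hmeas : Measurable fun x : ℝ × ℝ => x.2 ^ (a - 1) * (exp (-x.1 * x.2) * σ t x.1) := by
    fun_prop
  refine (integrable_prod_iff' hmeas.aestronglyMeasurable).2 ⟨?_, ?_⟩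
  · filter_upwards [ae_restrict_mem measurableSet_Ioi] with l hl
    exact (hσ.integrableOn_exp_mul ht (le_of_lt hl)).const_mul _
  · have hint : IntegrableOn (fun l : ℝ => l ^ (a - 1) * exp (-t * l ^ (α / 2))) (Ioi 0) :=
      integrableOn_rpow_mul_exp_neg_mul_rpow (by linarith) (by positivity) ht
    refine hint.congr_fun (fun l (hl : 0 < l) => ?_) measurableSet_Ioi
    dsimp only
    rw [neg_mul, ← hσ.integral_exp_mul ht hl.le, ← integral_const_mul]
    refine setIntegral_congr_fun measurableSet_Ioi fun u hu => ?_
    have := hσ.nonneg ht hu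
    exact (norm_of_nonneg (by positivity)).symm

-- Fubini for `Γ(a) * u ^ (-a) = ∫ l in Ioi 0, l ^ (a - 1) * exp (-u * l)`.
lemma integrableOn_rpow_neg_mul (hσ : IsStableSubordinatorDensity α σ) (hα : 0 < α)
    (ht : 0 < t) (ha : 0 < a) : IntegrableOn (fun u => u ^ (-a) * σ t u) (Ioi 0) := by
  have hint : IntegrableOn (fun u => (Gamma a)⁻¹ *
      ∫ l in Ioi 0, l ^ (a - 1) * (exp (-u * l) * σ t u)) (Ioi 0) :=
    (hσ.integrable_prod_rpow_mul_exp_mul hα ht ha).integral_prod_left.const_mul _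
  refine hint.congr_fun (fun u (hu : 0 < u) => ?_) measurableSet_Ioi
  have hΓ : Gamma a ≠ 0 := (Gamma_pos_of_pos ha).ne'
  simp only [← mul_assoc, neg_mul, integral_mul_const, integral_rpow_mul_exp_neg_mul_Ioi ha hu]
  rw [one_div, inv_rpow hu.le, rpow_neg hu.le]
  field_simp

lemma integrableOn_besselHeat_mul {ζ r s : ℝ} (hσ : IsStableSubordinatorDensity α σ)
    (hα : 0 < α) (hζ : -1 / 2 < ζ) (ht : 0 < t) (hr : 0 < r) (hs : 0 < s) :
    IntegrableOn (fun u => besselHeat ζ u r s * σ t u) (Ioi 0) := by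
  have ha : 0 < ζ + 1 / 2 := by linarith
  set a := ζ + 1 / 2
  have hmeas : AEStronglyMeasurable (fun u => besselHeat ζ u r s * σ t u)
      (volume.restrict (Ioi 0)) :=
    ((aemeasurable_besselHeat hζ hr hs).mul
      (hσ.measurable ht).aemeasurable).aestronglyMeasurable
  have hdom : IntegrableOn (fun u => 4 ^ (-ζ) * (Gamma (a + 1))⁻¹ *
      (r * s / 2 * (u ^ (-(a + 1)) * σ t u) + a * (u ^ (-a) * σ t u))) (Ioi 0) :=
    (((hσ.integrableOn_rpow_neg_mul hα ht (by positivity)).const_mul _).add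
      ((hσ.integrableOn_rpow_neg_mul hα ht ha).const_mul _)).const_mul _
  refine hdom.mono' hmeas ?_
  filter_upwards [ae_restrict_mem measurableSet_Ioi] with u (hu : 0 < u)
  have hσu := hσ.nonneg ht hu
  have : 0 < Gamma (a + 1) := Gamma_pos_of_pos (by positivity)
  have hprofile : invGammaProfile a ((r - s) ^ 2 / 4) u ≤ u ^ (-a) :=
    mul_le_of_le_one_right (by positivity) (exp_le_one_iff.2 (neg_nonpos.2 (by positivity)))
  rw [norm_of_nonneg (mul_nonneg (besselHeat_nonneg hζ hu hr hs) hσu)]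
  calc besselHeat ζ u r s * σ t u
      ≤ 4 ^ (-ζ) * (Gamma (a + 1))⁻¹ * ((r * s / (2 * u) + a) * u ^ (-a)) * σ t u := by
        gcongr
        refine (besselHeat_le hζ hu hr hs).trans ?_
        gcongr
    _ = _ := by
        rw [show -(a + 1) = -a - 1 by ring, rpow_sub_one hu.ne']
        ring

lemma integrableOn_invGammaProfile_mul (hσ : IsStableSubordinatorDensity α σ) (ha : 0 ≤ a)
    (hb : 0 < b) (ht : 0 < t) (hq : 0 ≤ q) :
    IntegrableOn (fun u => invGammaProfile a b (q * u) * σ t u) (Ioi 0) := by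
  have hmeas : Measurable fun u => invGammaProfile a b (q * u) :=
    (measurable_invGammaProfile a b).comp (measurable_const_mul q)
  refine (hσ.integrableOn ht).bdd_mul hmeas.aestronglyMeasurable (c := (a / b) ^ a) ?_
  filter_upwards [ae_restrict_mem measurableSet_Ioi] with u (hu : 0 < u)
  have hqu : 0 ≤ q * u := by positivity
  rw [norm_of_nonneg (invGammaProfile_nonneg a b hqu)]
  exact invGammaProfile_le ha hb hqu

lemma exists_setIntegral_invGammaProfile_mul_le (ha : 0 ≤ a) (hb : 0 < b) (hα : α ≠ 0) :
    ∃ D : ℝ, 0 < D ∧ ∀ (σ : ℝ → ℝ → ℝ) (t q : ℝ), IsStableSubordinatorDensity α σ → 0 < t →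
      0 < q → ∫ u in Ioi 0, invGammaProfile a b (q * u) * σ t u ≤ D * (t * q ^ (α / 2)) := by
  obtain ⟨D, hD, hprofile⟩ := exists_invGammaProfile_le_one_sub_exp ha hb
  refine ⟨D, hD, fun σ t q hσ ht hq => ?_⟩
  calc ∫ u in Ioi 0, invGammaProfile a b (q * u) * σ t u
      ≤ ∫ u in Ioi 0, D * ((1 - exp (-u * q)) * σ t u) := by
        refine setIntegral_mono_on (hσ.integrableOn_invGammaProfile_mul ha hb ht hq.le)
          ((hσ.integrableOn_one_sub_exp_mul ht hq.le).const_mul D) measurableSet_Ioi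
          fun u (hu : 0 < u) => ?_
        rw [← mul_assoc, neg_mul, mul_comm u]
        gcongr
        · exact hσ.nonneg ht hu
        · exact hprofile _ (by positivity)
    _ = D * (1 - exp (-(t * q ^ (α / 2)))) := by
        rw [integral_const_mul, hσ.integral_one_sub_exp_mul hα ht hq.le]
    _ ≤ D * (t * q ^ (α / 2)) := by
        gcongr
        linarith [add_one_le_exp (-(t * q ^ (α / 2)))]

lemma exp_sub_exp_le_setIntegral_invGammaProfile_mul {N : ℝ}
    (hσ : IsStableSubordinatorDensity α σ) (hα : α ≠ 0) (ha : 0 ≤ a) (hb : 0 < b) (hN : 0 < N)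
    (ht : 0 < t) (hq : 0 < q) :
    exp (-(t * q ^ (α / 2))) - exp (-(t * (2 * q) ^ (α / 2))) ≤
      2 / N * (1 - exp (-(t * (N * q) ^ (α / 2)))) +
        a ^ a * exp (b * N) * ∫ u in Ioi 0, invGammaProfile a b (q * u) * σ t u := by
  have h2q : 0 ≤ 2 * q := by positivity
  have hNq : 0 ≤ N * q := by positivity
  have hleft := (hσ.integrableOn_exp_mul ht hq.le).sub (hσ.integrableOn_exp_mul ht h2q)
  have hright₁ := (hσ.integrableOn_one_sub_exp_mul ht hNq).const_mul (2 / N)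
  have hright₂ := (hσ.integrableOn_invGammaProfile_mul ha hb ht hq.le).const_mul
    (a ^ a * exp (b * N))
  rw [← hσ.integral_exp_mul ht hq.le, ← hσ.integral_exp_mul ht h2q,
    ← hσ.integral_one_sub_exp_mul hα ht hNq,
    ← integral_sub (hσ.integrableOn_exp_mul ht hq.le) (hσ.integrableOn_exp_mul ht h2q),
    ← integral_const_mul, ← integral_const_mul, ← integral_add hright₁ hright₂]
  refine setIntegral_mono_on hleft (hright₁.add hright₂) measurableSet_Ioi
    fun u (hu : 0 < u) => ?_
  have hpointwise := mul_le_mul_of_nonneg_right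
    (exp_sub_exp_le_add_mul_invGammaProfile ha hb.le hN (mul_pos hq hu)) (hσ.nonneg ht hu)
  convert hpointwise using 1 <;> ring_nf

lemma exists_le_setIntegral_invGammaProfile_mul (ha : 0 < a) (hb : 0 < b) (hα : 0 < α)
    (hα2 : α < 2) (W : ℝ) :
    ∃ κ : ℝ, 0 < κ ∧ ∀ (σ : ℝ → ℝ → ℝ) (t q : ℝ), IsStableSubordinatorDensity α σ → 0 < t →
      0 < q → t * q ^ (α / 2) ≤ W →
        κ * (t * q ^ (α / 2)) ≤ ∫ u in Ioi 0, invGammaProfile a b (q * u) * σ t u := by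
  set β := α / 2 with hβ
  have h2β : 1 < (2 : ℝ) ^ β := one_lt_rpow one_lt_two (by positivity)
  set k := (2 ^ β - 1) * exp (-(2 ^ β * W))
  have hk0 : 0 < k := mul_pos (by linarith) (exp_pos _)
  -- The error `2 / N * (N ^ β * w)` absorbs at most half of `k * w` once `N` is large, as `β < 1`.
  obtain ⟨N, hN, hNk⟩ := exists_pos_two_div_mul_rpow_le (by linarith : β < 1) (half_pos hk0)
  set D := a ^ a * exp (b * N)
  refine ⟨k / (2 * D), by positivity, fun σ t q hσ ht hq hW => ?_⟩
  set w := t * q ^ β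
  set J := ∫ u in Ioi 0, invGammaProfile a b (q * u) * σ t u
  have hJ : exp (-w) - exp (-(2 ^ β * w)) ≤ 2 / N * (1 - exp (-(N ^ β * w))) + D * J := by
    have h := hσ.exp_sub_exp_le_setIntegral_invGammaProfile_mul hα.ne' ha.le hb hN ht hq
    rwa [mul_rpow two_pos.le hq.le, mul_rpow hN.le hq.le, mul_left_comm t, mul_left_comm t] at h
  have hmain : k * w ≤ exp (-w) - exp (-(2 ^ β * w)) :=
    sub_one_mul_exp_mul_le_exp_sub_exp h2β.le (by positivity) hW
  have htail : 2 / N * (1 - exp (-(N ^ β * w))) ≤ k / 2 * w :=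
    calc 2 / N * (1 - exp (-(N ^ β * w))) ≤ 2 / N * (N ^ β * w) := by
          gcongr
          linarith [add_one_le_exp (-(N ^ β * w))]
      _ = 2 / N * N ^ β * w := by ring
      _ ≤ k / 2 * w := by gcongr
  calc k / (2 * D) * w = (k * w - k / 2 * w) / D := by field_simp; ring
    _ ≤ J := by
        rw [div_le_iff₀' (by positivity)]
        linarith

end IsStableSubordinatorDensity

section SubKernel

variable {ζ α : ℝ}

lemma rpow_neg_two_rpow_mul_rpow_neg {s : ℝ} (hs : 0 < s) :
    (s ^ (-2 : ℝ)) ^ (α / 2) * s ^ (-(2 * (ζ + 1 / 2))) = s ^ (-(2 * ζ + 1 + α)) := by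
  rw [← rpow_mul hs.le, ← rpow_add hs]
  ring_nf

lemma exists_subKernel_le (hζ : -1 / 2 < ζ) (hα : 0 < α) :
    ∃ C : ℝ, 0 < C ∧ ∀ (σ : ℝ → ℝ → ℝ) (t z s : ℝ), IsStableSubordinatorDensity α σ → 0 < t →
      0 < z → 0 < s → z ≤ s / 2 → subKernel ζ σ t z s ≤ C * (t * s ^ (-(2 * ζ + 1 + α))) := by
  have ha : 0 < ζ + 1 / 2 := by linarith
  obtain ⟨C, hC, hheat⟩ := exists_besselHeat_le_of_le_half hζ
  obtain ⟨D, hD, hint⟩ :=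
    IsStableSubordinatorDensity.exists_setIntegral_invGammaProfile_mul_le ha.le
      (by norm_num : (0 : ℝ) < 1 / 32) hα.ne'
  refine ⟨C * D, by positivity, fun σ t z s hσ ht hz hs hzs => ?_⟩
  set a := ζ + 1 / 2
  set q := s ^ (-2 : ℝ) with hq
  have hq0 : 0 < q := by positivity
  calc subKernel ζ σ t z s
      ≤ ∫ u in Ioi 0, C * s ^ (-(2 * a)) * (invGammaProfile a (1 / 32) (q * u) * σ t u) := by
        refine setIntegral_mono_on (hσ.integrableOn_besselHeat_mul hα hζ ht hz hs)
          ((hσ.integrableOn_invGammaProfile_mul ha.le (by norm_num) ht hq0.le).const_mul _)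
          measurableSet_Ioi fun u (hu : 0 < u) => ?_
        rw [← mul_assoc, mul_assoc C, hq, ← invGammaProfile_mul_sq a _ hs hu]
        gcongr
        · exact hσ.nonneg ht hu
        · exact hheat u z s hu hz hs hzs
    _ ≤ C * s ^ (-(2 * a)) * (D * (t * q ^ (α / 2))) := by
        rw [integral_const_mul]
        gcongr
        exact hint σ t q hσ ht hq0
    _ = C * D * (t * s ^ (-(2 * ζ + 1 + α))) := by
        rw [← rpow_neg_two_rpow_mul_rpow_neg hs]
        ring

lemma exists_le_subKernel (hζ : -1 / 2 < ζ) (hα : 0 < α) (hα2 : α < 2) (R W : ℝ) :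
    ∃ κ : ℝ, 0 < κ ∧ ∀ (σ : ℝ → ℝ → ℝ) (t r s : ℝ), IsStableSubordinatorDensity α σ → 0 < t →
      0 < r → 0 < s → r ≤ R * s → t ≤ W * s ^ α →
        κ * (t * s ^ (-(2 * ζ + 1 + α))) ≤ subKernel ζ σ t r s := by
  have ha : 0 < ζ + 1 / 2 := by linarith
  set a := ζ + 1 / 2
  set b := (R ^ 2 + 1) / 4 with hb
  obtain ⟨κ, hκ, hint⟩ :=
    IsStableSubordinatorDensity.exists_le_setIntegral_invGammaProfile_mul (b := b) ha
      (by positivity) hα hα2 W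
  have := Gamma_pos_of_pos ha
  set C := 4 ^ (-ζ) * (Gamma a)⁻¹
  refine ⟨C * κ, by positivity, fun σ t r s hσ ht hr hs hrs hts => ?_⟩
  set q := s ^ (-2 : ℝ) with hq
  have hq0 : 0 < q := by positivity
  have htq : t * q ^ (α / 2) ≤ W := by
    rw [hq, ← rpow_mul hs.le, show -2 * (α / 2) = -α by ring, rpow_neg hs.le,
      ← div_eq_mul_inv, div_le_iff₀ (by positivity)]
    exact hts
  have hbs : (r ^ 2 + s ^ 2) / 4 ≤ b * s ^ 2 := by
    have : r ^ 2 ≤ (R * s) ^ 2 := by gcongr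
    rw [hb]
    linarith
  calc C * κ * (t * s ^ (-(2 * ζ + 1 + α)))
      = C * s ^ (-(2 * a)) * (κ * (t * q ^ (α / 2))) := by
        rw [← rpow_neg_two_rpow_mul_rpow_neg hs]
        ring
    _ ≤ C * s ^ (-(2 * a)) * ∫ u in Ioi 0, invGammaProfile a b (q * u) * σ t u := by
        gcongr
        exact hint σ t q hσ ht hq0 htq
    _ = ∫ u in Ioi 0, C * s ^ (-(2 * a)) * (invGammaProfile a b (q * u) * σ t u) :=
        (integral_const_mul _ _).symm
    _ ≤ subKernel ζ σ t r s := by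
        refine setIntegral_mono_on
          ((hσ.integrableOn_invGammaProfile_mul ha.le (by positivity) ht hq0.le).const_mul _)
          (hσ.integrableOn_besselHeat_mul hα hζ ht hr hs) measurableSet_Ioi
          fun u (hu : 0 < u) => ?_
        rw [← mul_assoc, mul_assoc C, hq, ← invGammaProfile_mul_sq a _ hs hu]
        refine mul_le_mul_of_nonneg_right (le_trans ?_ (le_besselHeat hζ hu hr hs))
          (hσ.nonneg ht hu)
        gcongr
        exact invGammaProfile_anti_right a hbs hu

lemma exists_subKernel_le_subKernel_one {C₀ : ℝ} (hζ : -1 / 2 < ζ) (hα : 0 < α) (hα2 : α < 2)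
    (hC₀ : 0 < C₀) :
    ∃ K : ℝ, 0 < K ∧ ∀ (σ : ℝ → ℝ → ℝ) (τ z s : ℝ), IsStableSubordinatorDensity α σ → 0 < τ →
      τ ≤ 1 → C₀ ≤ s → 0 < z → z ≤ s / 2 → subKernel ζ σ τ z s ≤ K * subKernel ζ σ 1 1 s := by
  obtain ⟨C, hC, hupper⟩ := exists_subKernel_le hζ hα
  obtain ⟨κ, hκ, hlower⟩ := exists_le_subKernel hζ hα hα2 C₀⁻¹ (C₀ ^ α)⁻¹
  refine ⟨C / κ, by positivity, fun σ τ z s hσ hτ hτ1 hs hz hzs => ?_⟩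
  have hs0 : 0 < s := hC₀.trans_le hs
  have hr : 1 ≤ C₀⁻¹ * s := by rwa [← div_eq_inv_mul, one_le_div hC₀]
  have ht : 1 ≤ (C₀ ^ α)⁻¹ * s ^ α := by
    rw [← div_eq_inv_mul, one_le_div (by positivity)]
    gcongr
  calc subKernel ζ σ τ z s ≤ C * (τ * s ^ (-(2 * ζ + 1 + α))) := hupper σ τ z s hσ hτ hz hs0 hzs
    _ ≤ C * (1 * s ^ (-(2 * ζ + 1 + α))) := by gcongr
    _ = C / κ * (κ * (1 * s ^ (-(2 * ζ + 1 + α)))) := by field_simp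
    _ ≤ C / κ * subKernel ζ σ 1 1 s := by
        gcongr
        exact hlower σ 1 1 s hσ one_pos one_pos hs0 hr ht

end SubKernel

theorem stmt17 (ζ α C₀ : ℝ) (hζ : -1/2 < ζ) (hα0 : 0 < α) (hα2 : α ≤ 2) (hC0 : 0 < C₀)
    (p : ℝ → ℝ → ℝ → ℝ) (hp : IsSubordinatedBesselKernel ζ α p) :
    ∃ c K : ℝ, 0 < c ∧ 0 < K ∧
      ∀ τ z s : ℝ, 0 < τ → τ ≤ 1 → C₀ ≤ s → 0 < z → z ≤ s / 2 →
        p τ z s ≤ K * p 1 c (c * s) := by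
  rcases hp with ⟨-, hp⟩ | ⟨hα, σ, hσ, hp⟩
  · obtain ⟨K, hK, hle⟩ := exists_besselHeat_le_besselHeat_one hζ hC0
    exact ⟨1 / 4, K, by norm_num, hK, by simpa only [hp] using hle⟩
  · obtain ⟨K, hK, hle⟩ := exists_subKernel_le_subKernel_one hζ hα0 hα hC0
    exact ⟨1, K, one_pos, hK, by simpa only [hp, one_mul] using fun τ z s => hle σ τ z s hσ⟩
end

section
/- Let ζ ∈ (-1/2, ∞) and α ∈ (0,2]. Then there exist constants c > 0 and K > 0 (depending only on ζ and α) such that for all 0 < r ≤ s: p_ζ^{(α)}(1,1,s) ≤ K · p_ζ^{(α)}(1, c r, c s). In particular, for all r, s > 0: min{ p_ζ^{(α)}(1,1,r), p_ζ^{(α)}(1,1,s) } ≤ K · p_ζ^{(α)}(1, c r, c s). -/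
open MeasureTheory Real Set Filter

/-!
The kernel `p_ζ^{(α)}(t, ·, ·)` is a mixture of the Bessel heat kernels over a random time all of
whose negative moments are finite: a deterministic time if `α = 2`, the stable subordinator
otherwise, where finiteness follows by integrating the Laplace transform against `l ^ (q - 1)`.

With `z = rs / (2t)`, the bounds `1 ≤ Γ(ν + 1) (z / 2) ^ (-ν) I_ν(z) ≤ (1 + z / (2 (ν + 1))) e ^ z`
trap the heat kernel between two Gaussian expressions with the same prefactor. If `s` is large
compared with the starting point `x`, these give `p(τ, x, s) ≤ p(τ, c r, c s)` for every time `τ`,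
provided `2 c ^ 2 < 1`. If `s` stays bounded, the left-hand side of the mixture is bounded above by
negative moments and the right-hand side is bounded away from `0`.
-/

section BesselI

theorem Gamma_mul_factorial_le_Gamma_add {x : ℝ} (hx : 1 ≤ x) (k : ℕ) :
    Gamma x * (k.factorial : ℝ) ≤ Gamma (x + k) := by
  induction k with
  | zero => simp
  | succ k ih =>
    have hpos : 0 < x + k := by positivity
    calc Gamma x * ((k + 1).factorial : ℝ)
        = (1 + k) * (Gamma x * (k.factorial : ℝ)) := by
          rw [Nat.factorial_succ]; push_cast; ring
      _ ≤ (x + k) * Gamma (x + k) := by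
          have := Gamma_pos_of_pos hpos
          gcongr
      _ = Gamma (x + (k + 1 : ℕ)) := by
          rw [← Gamma_add_one hpos.ne', Nat.cast_succ, add_assoc]

theorem factorial_two_mul_le_four_pow (k : ℕ) :
    (2 * k).factorial ≤ 4 ^ k * (k.factorial * k.factorial) := by
  calc (2 * k).factorial = k.centralBinom * (k.factorial * k.factorial) := by
        rw [← mul_assoc, Nat.centralBinom_eq_two_mul_choose]
        have := Nat.choose_mul_factorial_mul_factorial (show k ≤ 2 * k by lia)
        rwa [show 2 * k - k = k by lia, eq_comm] at this
    _ ≤ 4 ^ k * (k.factorial * k.factorial) := by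
        gcongr
        exact k.centralBinom_le_four_pow

theorem hasSum_add_natCast_mul_even_pow_div_factorial (b x : ℝ) :
    HasSum (fun k : ℕ => (b + k) * (x ^ (2 * k) / ((2 * k).factorial : ℝ)))
      (b * cosh x + x / 2 * sinh x) := by
  have hsinh : HasSum (fun k : ℕ => k * (x ^ (2 * k) / ((2 * k).factorial : ℝ)))
      (x / 2 * sinh x) := by
    have hshift (k : ℕ) : x / 2 * (x ^ (2 * k + 1) / ((2 * k + 1).factorial : ℝ)) =
        ((k + 1 : ℕ) : ℝ) * (x ^ (2 * (k + 1)) / ((2 * (k + 1)).factorial : ℝ)) := by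
      rw [show 2 * (k + 1) = 2 * k + 1 + 1 by ring, Nat.factorial_succ (2 * k + 1)]
      push_cast
      field_simp
      ring
    rw [← hasSum_nat_add_iff' 1]
    simpa only [hshift, Finset.sum_range_one, Nat.cast_zero, zero_mul, sub_zero] using
      (hasSum_sinh x).mul_left (x / 2)
  simpa only [add_mul] using ((hasSum_cosh x).mul_left b).add hsinh

/-- The `k`-th term of the series defining `besselI ν x`. -/
noncomputable def besselITerm (ν x : ℝ) (k : ℕ) : ℝ :=
  (x / 2) ^ (2 * (k : ℝ) + ν) / ((k.factorial : ℝ) * Gamma (k + ν + 1))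

variable {ν x : ℝ}

theorem besselITerm_nonneg (hν : -1 < ν) (hx : 0 ≤ x) (k : ℕ) : 0 ≤ besselITerm ν x k := by
  have hk : 0 < k + ν + 1 := by linarith [k.cast_nonneg (α := ℝ)]
  have := Gamma_pos_of_pos hk
  unfold besselITerm
  positivity

theorem Gamma_mul_factorial_two_mul_le (hν : -1 < ν) (k : ℕ) :
    Gamma (ν + 2) * ((2 * k).factorial : ℝ) ≤
      (ν + 1 + k) * (4 ^ k * (k.factorial * Gamma (k + ν + 1))) := by
  have hk : 0 < k + ν + 1 := by linarith [k.cast_nonneg (α := ℝ)]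
  have hΓ : 0 < Gamma (ν + 2) := Gamma_pos_of_pos (by linarith)
  have hGamma : Gamma (ν + 2) * (k.factorial : ℝ) ≤ (ν + 1 + k) * Gamma (k + ν + 1) := by
    refine (Gamma_mul_factorial_le_Gamma_add (by linarith) k).trans_eq ?_
    rw [show ν + 1 + k = k + ν + 1 by ring, ← Gamma_add_one hk.ne']
    ring_nf
  have hfactorial : ((2 * k).factorial : ℝ) ≤ 4 ^ k * ((k.factorial : ℝ) * k.factorial) :=
    mod_cast factorial_two_mul_le_four_pow k
  calc Gamma (ν + 2) * ((2 * k).factorial : ℝ)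
      ≤ Gamma (ν + 2) * (4 ^ k * ((k.factorial : ℝ) * k.factorial)) := by gcongr
    _ = 4 ^ k * k.factorial * (Gamma (ν + 2) * k.factorial) := by ring
    _ ≤ 4 ^ k * k.factorial * ((ν + 1 + k) * Gamma (k + ν + 1)) := by gcongr
    _ = (ν + 1 + k) * (4 ^ k * (k.factorial * Gamma (k + ν + 1))) := by ring

theorem besselITerm_le (hν : -1 < ν) (hx : 0 < x) (k : ℕ) :
    besselITerm ν x k ≤
      (x / 2) ^ ν / Gamma (ν + 2) * ((ν + 1 + k) * (x ^ (2 * k) / ((2 * k).factorial : ℝ))) := by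
  have hk : 0 < k + ν + 1 := by linarith [k.cast_nonneg (α := ℝ)]
  have := Gamma_pos_of_pos hk
  have hΓ : 0 < Gamma (ν + 2) := Gamma_pos_of_pos (by linarith)
  have hdenom := Gamma_mul_factorial_two_mul_le hν k
  have hterm : besselITerm ν x k =
      (x / 2) ^ ν * (x ^ (2 * k) / (4 ^ k * (k.factorial * Gamma (k + ν + 1)))) := by
    rw [besselITerm, rpow_add (by positivity), ← Nat.cast_ofNat (n := 2), ← Nat.cast_mul,
      rpow_natCast, div_pow, Nat.cast_ofNat, pow_mul 2 2 k]
    ring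
  calc besselITerm ν x k
      = (x / 2) ^ ν * (x ^ (2 * k) / (4 ^ k * (k.factorial * Gamma (k + ν + 1)))) := hterm
    _ ≤ (x / 2) ^ ν * ((ν + 1 + k) * x ^ (2 * k) / (Gamma (ν + 2) * (2 * k).factorial)) := by
        refine mul_le_mul_of_nonneg_left ?_ (by positivity)
        rw [div_le_div_iff₀ (by positivity) (by positivity), mul_right_comm, mul_comm]
        gcongr
    _ = _ := by field_simp

theorem summable_besselITerm (hν : -1 < ν) (hx : 0 < x) : Summable (besselITerm ν x) :=
  ((hasSum_add_natCast_mul_even_pow_div_factorial (ν + 1) x).summable.mul_left _).of_nonneg_of_le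
    (besselITerm_nonneg hν hx.le) (besselITerm_le hν hx)

theorem rpow_div_Gamma_le_besselI (hν : -1 < ν) (hx : 0 < x) :
    (x / 2) ^ ν / Gamma (ν + 1) ≤ besselI ν x := by
  simpa [besselITerm, besselI] using
    (summable_besselITerm hν hx).le_tsum 0 fun k _ => besselITerm_nonneg hν hx.le k

theorem besselI_le_rpow_div_Gamma_mul_exp (hν : -1 < ν) (hx : 0 < x) :
    besselI ν x ≤ (x / 2) ^ ν / Gamma (ν + 1) * ((1 + x / (2 * (ν + 1))) * exp x) := by
  have hν' : 0 < ν + 1 := by linarith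
  have := Gamma_pos_of_pos hν'
  have hcosh : cosh x ≤ exp x := by
    rw [← cosh_add_sinh]
    exact le_add_of_nonneg_right (sinh_nonneg_iff.2 hx.le)
  have hsinh : sinh x ≤ exp x := (sinh_lt_cosh x).le.trans hcosh
  have hmajorant := hasSum_add_natCast_mul_even_pow_div_factorial (ν + 1) x
  calc besselI ν x
      ≤ (x / 2) ^ ν / Gamma (ν + 2) * ((ν + 1) * cosh x + x / 2 * sinh x) :=
        hasSum_le (besselITerm_le hν hx) (summable_besselITerm hν hx).hasSum
          (hmajorant.mul_left _)
    _ ≤ (x / 2) ^ ν / Gamma (ν + 2) * ((ν + 1) * exp x + x / 2 * exp x) := by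
        have := Gamma_pos_of_pos (show 0 < ν + 2 by linarith)
        gcongr
    _ = (x / 2) ^ ν / Gamma (ν + 1) * ((1 + x / (2 * (ν + 1))) * exp x) := by
        rw [show ν + 2 = ν + 1 + 1 by ring, Gamma_add_one hν'.ne']
        field_simp

theorem measurable_besselI (ν : ℝ) : Measurable (besselI ν) := by
  unfold besselI
  exact Measurable.tsum fun k => by fun_prop

end BesselI

section BesselHeat

theorem besselHeat_comm (ζ t r s : ℝ) : besselHeat ζ t r s = besselHeat ζ t s r := by
  rw [besselHeat, besselHeat, mul_comm r s, add_comm (r ^ 2)]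

theorem measurable_besselHeat (ζ r s : ℝ) : Measurable fun t => besselHeat ζ t r s := by
  have := (measurable_besselI (ζ - 1 / 2)).comp
    (show Measurable fun t => r * s / (2 * t) by fun_prop)
  unfold besselHeat
  fun_prop

/-- The value at `r = s = 0` of the continuous extension of the Bessel heat kernel. -/
noncomputable def besselHeatOrigin (ζ t : ℝ) : ℝ :=
  2 / Gamma (ζ + 1 / 2) * (4 * t) ^ (-(ζ + 1 / 2))

variable {ζ t r s : ℝ}

theorem besselHeatOrigin_pos (hζ : -1 / 2 < ζ) (ht : 0 < t) : 0 < besselHeatOrigin ζ t := by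
  have := Gamma_pos_of_pos (show 0 < ζ + 1 / 2 by linarith)
  unfold besselHeatOrigin
  positivity

theorem rpow_div_mul_rpow_eq_besselHeatOrigin (ht : 0 < t) (hr : 0 < r) (hs : 0 < s) :
    (r * s) ^ (1 / 2 - ζ) / (2 * t) *
        ((r * s / (2 * t) / 2) ^ (ζ - 1 / 2) / Gamma (ζ - 1 / 2 + 1)) =
      besselHeatOrigin ζ t := by
  have hcancel : (r * s) ^ (1 / 2 - ζ) * (r * s) ^ (ζ - 1 / 2) = 1 := by
    rw [← rpow_add (by positivity), sub_add_sub_cancel', sub_self, rpow_zero]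
  have hpow : (4 * t) ^ (-(ζ + 1 / 2)) = ((4 * t) ^ (ζ - 1 / 2))⁻¹ / (4 * t) := by
    rw [← rpow_neg (by positivity), ← rpow_sub_one (by positivity)]
    ring_nf
  rw [besselHeatOrigin, hpow, show r * s / (2 * t) / 2 = r * s / (4 * t) by ring,
    div_rpow (by positivity) (by positivity), show ζ - 1 / 2 + 1 = ζ + 1 / 2 by ring]
  calc _ = (r * s) ^ (1 / 2 - ζ) * (r * s) ^ (ζ - 1 / 2) *
        (2 / Gamma (ζ + 1 / 2) * (((4 * t) ^ (ζ - 1 / 2))⁻¹ / (4 * t))) := by ring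
    _ = _ := by rw [hcancel, one_mul]

theorem besselHeatOrigin_mul_exp_le_besselHeat (hζ : -1 / 2 < ζ) (ht : 0 < t) (hr : 0 < r)
    (hs : 0 < s) :
    besselHeatOrigin ζ t * exp (-(r ^ 2 + s ^ 2) / (4 * t)) ≤ besselHeat ζ t r s := by
  rw [← rpow_div_mul_rpow_eq_besselHeatOrigin ht hr hs, mul_right_comm, besselHeat]
  gcongr
  exact rpow_div_Gamma_le_besselI (by linarith) (by positivity)

theorem besselHeat_pos (hζ : -1 / 2 < ζ) (ht : 0 < t) (hr : 0 < r) (hs : 0 < s) :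
    0 < besselHeat ζ t r s :=
  (mul_pos (besselHeatOrigin_pos hζ ht) (exp_pos _)).trans_le
    (besselHeatOrigin_mul_exp_le_besselHeat hζ ht hr hs)

theorem besselHeat_le_besselHeatOrigin_mul_exp (hζ : -1 / 2 < ζ) (ht : 0 < t) (hr : 0 < r)
    (hs : 0 < s) : besselHeat ζ t r s ≤ besselHeatOrigin ζ t *
      ((1 + r * s / ((4 * ζ + 2) * t)) * exp (-(r - s) ^ 2 / (4 * t))) := by
  have hexp : exp (-(r - s) ^ 2 / (4 * t)) =
      exp (-(r ^ 2 + s ^ 2) / (4 * t)) * exp (r * s / (2 * t)) := by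
    rw [← exp_add]
    congr 1
    field_simp
    ring
  have hx : r * s / (2 * t) / (2 * (ζ - 1 / 2 + 1)) = r * s / ((4 * ζ + 2) * t) := by
    rw [div_div]
    ring_nf
  calc besselHeat ζ t r s
      ≤ (r * s) ^ (1 / 2 - ζ) / (2 * t) * exp (-(r ^ 2 + s ^ 2) / (4 * t)) *
          ((r * s / (2 * t) / 2) ^ (ζ - 1 / 2) / Gamma (ζ - 1 / 2 + 1) *
            ((1 + r * s / (2 * t) / (2 * (ζ - 1 / 2 + 1))) * exp (r * s / (2 * t)))) := by
        rw [besselHeat]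
        gcongr
        exact besselI_le_rpow_div_Gamma_mul_exp (by linarith) (by positivity)
    _ = _ := by
        rw [← rpow_div_mul_rpow_eq_besselHeatOrigin ht hr hs, hexp, hx]
        ring

theorem besselHeat_le_of_mul_le (hζ : -1 / 2 < ζ) (ht : 0 < t) (hr : 0 < r) (hs : 0 < s) {M : ℝ}
    (hM : r * s ≤ M) :
    besselHeat ζ t r s ≤ besselHeatOrigin ζ t * (1 + M / ((4 * ζ + 2) * t)) := by
  have hζ' : 0 < 4 * ζ + 2 := by linarith
  have := besselHeatOrigin_pos hζ ht
  have hexp : exp (-(r - s) ^ 2 / (4 * t)) ≤ 1 :=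
    by
    rw [neg_div]
    exact exp_le_one_iff.2 (neg_nonpos.2 (by positivity))
  refine (besselHeat_le_besselHeatOrigin_mul_exp hζ ht hr hs).trans ?_
  gcongr
  exact (mul_le_of_le_one_right (by positivity) hexp).trans (by gcongr)

/-- Far from the starting point `x`, the factor `1 + x s / ((4ζ + 2) t)` is absorbed into the gap
between the exponents `-(x - s)² / (4t)` and `-c² (r² + s²) / (4t)`. -/
theorem besselHeat_le_besselHeat_of_far (hζ : -1 / 2 < ζ) (ht : 0 < t) {c x : ℝ} (hc : 0 < c)
    (hx : 0 < x) (hr : 0 < r) (hrs : r ≤ s)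
    (hfar : (2 + 1 / (ζ + 1 / 2)) * x ≤ (1 - 2 * c ^ 2) * s) :
    besselHeat ζ t x s ≤ besselHeat ζ t (c * r) (c * s) := by
  have hs : 0 < s := hr.trans_le hrs
  have := besselHeatOrigin_pos hζ ht
  have hexponent : x * s / ((4 * ζ + 2) * t) + -(x - s) ^ 2 / (4 * t) ≤
      -((c * r) ^ 2 + (c * s) ^ 2) / (4 * t) := by
    have hsq : (c * r) ^ 2 ≤ (c * s) ^ 2 := by gcongr
    have hfar' := mul_le_mul_of_nonneg_right hfar hs.le
    have hdenom : (4 * ζ + 2) * t = (ζ + 1 / 2) * (4 * t) := by ring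
    rw [show x * s / ((4 * ζ + 2) * t) = (1 / (ζ + 1 / 2) * x * s) / (4 * t) by
      rw [hdenom, ← div_div]; ring, ← add_div]
    gcongr
    nlinarith
  calc besselHeat ζ t x s
      ≤ besselHeatOrigin ζ t *
          ((1 + x * s / ((4 * ζ + 2) * t)) * exp (-(x - s) ^ 2 / (4 * t))) :=
        besselHeat_le_besselHeatOrigin_mul_exp hζ ht hx hs
    _ ≤ besselHeatOrigin ζ t *
          (exp (x * s / ((4 * ζ + 2) * t)) * exp (-(x - s) ^ 2 / (4 * t))) := by
        gcongr
        rw [add_comm]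
        exact add_one_le_exp _
    _ ≤ besselHeatOrigin ζ t * exp (-((c * r) ^ 2 + (c * s) ^ 2) / (4 * t)) := by
        rw [← exp_add]
        gcongr
    _ ≤ besselHeat ζ t (c * r) (c * s) :=
        besselHeatOrigin_mul_exp_le_besselHeat hζ ht (by positivity) (by positivity)

end BesselHeat

section Mixture

theorem exists_pos_integral_le_mul_integral {X : Type*} [MeasurableSpace X] {μ : Measure X}
    (u : X → ℝ) {v : X → ℝ} (hv : Integrable v μ) (hv_pos : ∀ᵐ a ∂μ, 0 < v a) :
    ∃ K : ℝ, 0 < K ∧ ∫ a, u a ∂μ ≤ K * ∫ a, v a ∂μ := by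
  rcases eq_or_ne μ 0 with rfl | hμ
  · exact ⟨1, one_pos, by simp⟩
  · have hv_nonneg : 0 ≤ᵐ[μ] v := hv_pos.mono fun _ => le_of_lt
    have hint : 0 < ∫ a, v a ∂μ := by
      refine (integral_nonneg_of_ae hv_nonneg).lt_of_ne' fun h => hμ ?_
      have hv_zero := (integral_eq_zero_iff_of_nonneg_ae hv_nonneg hv).1 h
      rw [← ae_eq_bot, ← eventually_false_iff_eq_bot]
      filter_upwards [hv_zero, hv_pos] with a h0 hpos using hpos.ne' h0
    refine ⟨|∫ a, u a ∂μ| / (∫ a, v a ∂μ) + 1, by positivity, ?_⟩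
    rw [add_mul, div_mul_cancel₀ _ hint.ne', one_mul]
    exact (le_abs_self _).trans (le_add_of_nonneg_right hint.le)

variable {ζ : ℝ} {μ : Measure ℝ} (hζ : -1 / 2 < ζ) (hμ : ∀ᵐ t ∂μ, 0 < t)
  (hmoment : ∀ q : ℝ, 0 < q → Integrable (fun t => t ^ (-q)) μ)
include hζ hμ hmoment

theorem integrable_besselHeatOrigin_mul_one_add_div (M : ℝ) :
    Integrable (fun t => besselHeatOrigin ζ t * (1 + M / ((4 * ζ + 2) * t))) μ := by
  have hM (t : ℝ) : M / ((4 * ζ + 2) * t) = M / (4 * ζ + 2) / t := by rw [div_div]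
  have hmoments := (hmoment (ζ + 1 / 2) (by linarith)).add
    ((hmoment (ζ + 3 / 2) (by linarith)).const_mul (M / (4 * ζ + 2)))
  refine (hmoments.const_mul (2 / Gamma (ζ + 1 / 2) * 4 ^ (-(ζ + 1 / 2)))).congr ?_
  filter_upwards [hμ] with t ht
  rw [Pi.add_apply, besselHeatOrigin, mul_rpow (by norm_num) ht.le, hM,
    show -(ζ + 3 / 2) = -(ζ + 1 / 2) - 1 by ring, rpow_sub_one ht.ne']
  ring

theorem integrable_besselHeat {r s : ℝ} (hr : 0 < r) (hs : 0 < s) :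
    Integrable (fun t => besselHeat ζ t r s) μ := by
  refine (integrable_besselHeatOrigin_mul_one_add_div hζ hμ hmoment (r * s)).mono'
    (measurable_besselHeat ζ r s).aestronglyMeasurable ?_
  filter_upwards [hμ] with t ht
  rw [norm_of_nonneg (besselHeat_pos hζ ht hr hs).le]
  exact besselHeat_le_of_mul_le hζ ht hr hs le_rfl

variable {c x : ℝ} (hc : 0 < c) (hx : 0 < x)
include hc hx

theorem exists_integral_besselHeat_le_mul_of_le (S : ℝ) :
    ∃ K : ℝ, 0 < K ∧ ∀ r s : ℝ, 0 < r → r ≤ s → s ≤ S →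
      ∫ t, besselHeat ζ t x s ∂μ ≤ K * ∫ t, besselHeat ζ t (c * r) (c * s) ∂μ := by
  let u : ℝ → ℝ := fun t => besselHeatOrigin ζ t * (1 + x * S / ((4 * ζ + 2) * t))
  let v : ℝ → ℝ := fun t => besselHeatOrigin ζ t * exp (-((c * S) ^ 2 + (c * S) ^ 2) / (4 * t))
  have hu : Integrable u μ :=
    integrable_besselHeatOrigin_mul_one_add_div hζ hμ hmoment (x * S)
  have hv_pos : ∀ᵐ t ∂μ, 0 < v t := by
    filter_upwards [hμ] with t ht using mul_pos (besselHeatOrigin_pos hζ ht) (exp_pos _)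
  have hv : Integrable v μ := by
    refine (integrable_besselHeatOrigin_mul_one_add_div hζ hμ hmoment 0).mono'
      (by unfold v besselHeatOrigin; fun_prop) ?_
    filter_upwards [hμ, hv_pos] with t ht hvt
    rw [norm_of_nonneg hvt.le, zero_div, add_zero]
    refine mul_le_mul_of_nonneg_left ?_ (besselHeatOrigin_pos hζ ht).le
    rw [neg_div]
    exact exp_le_one_iff.2 (neg_nonpos.2 (by positivity))
  obtain ⟨K, hK, hle⟩ := exists_pos_integral_le_mul_integral u hv hv_pos
  refine ⟨K, hK, fun r s hr hrs hsS => ?_⟩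
  have hs : 0 < s := hr.trans_le hrs
  have hcr : 0 < c * r := by positivity
  have hcs : 0 < c * s := by positivity
  have hupper : ∫ t, besselHeat ζ t x s ∂μ ≤ ∫ t, u t ∂μ := by
    refine integral_mono_ae (integrable_besselHeat hζ hμ hmoment hx hs) hu ?_
    filter_upwards [hμ] with t ht using besselHeat_le_of_mul_le hζ ht hx hs (by gcongr)
  have hlower : ∫ t, v t ∂μ ≤ ∫ t, besselHeat ζ t (c * r) (c * s) ∂μ := by
    refine integral_mono_ae hv (integrable_besselHeat hζ hμ hmoment hcr hcs) ?_
    filter_upwards [hμ] with t ht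
    refine le_trans ?_ (besselHeatOrigin_mul_exp_le_besselHeat hζ ht hcr hcs)
    have := besselHeatOrigin_pos hζ ht
    unfold v
    gcongr
    exact hrs.trans hsS
  exact hupper.trans (hle.trans (by gcongr))

theorem exists_integral_besselHeat_le_mul (hc_sq : 2 * c ^ 2 < 1) :
    ∃ K : ℝ, 0 < K ∧ ∀ r s : ℝ, 0 < r → r ≤ s →
      ∫ t, besselHeat ζ t x s ∂μ ≤ K * ∫ t, besselHeat ζ t (c * r) (c * s) ∂μ := by
  have hgap : 0 < 1 - 2 * c ^ 2 := by linarith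
  let S : ℝ := (2 + 1 / (ζ + 1 / 2)) * x / (1 - 2 * c ^ 2)
  obtain ⟨K, hK, hnear⟩ := exists_integral_besselHeat_le_mul_of_le hζ hμ hmoment hc hx S
  refine ⟨max K 1, by positivity, fun r s hr hrs => ?_⟩
  have hs : 0 < s := hr.trans_le hrs
  have hcr : 0 < c * r := by positivity
  have hcs : 0 < c * s := by positivity
  have hnonneg : 0 ≤ ∫ t, besselHeat ζ t (c * r) (c * s) ∂μ :=
    integral_nonneg_of_ae <| hμ.mono fun t ht => (besselHeat_pos hζ ht hcr hcs).le
  rcases le_total s S with hsS | hSs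
  · exact (hnear r s hr hrs hsS).trans (by gcongr; exact le_max_left _ _)
  · refine le_trans ?_ (le_mul_of_one_le_left hnonneg (le_max_right _ _))
    refine integral_mono_ae (integrable_besselHeat hζ hμ hmoment hx hs)
      (integrable_besselHeat hζ hμ hmoment hcr hcs) ?_
    filter_upwards [hμ] with t ht
    exact besselHeat_le_besselHeat_of_far hζ ht hc hx hr hrs ((div_le_iff₀' hgap).1 hSs)

end Mixture

section Subordinator

theorem integrable_rpow_neg_of_integrableOn_laplace {μ : Measure ℝ} [SFinite μ]
    (hμ : ∀ᵐ τ ∂μ, 0 < τ) {q : ℝ} (hq : 0 < q)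
    (hexp : ∀ l : ℝ, 0 < l → Integrable (fun τ => exp (-τ * l)) μ)
    (hlaplace : IntegrableOn (fun l => l ^ (q - 1) * ∫ τ, exp (-τ * l) ∂μ) (Ioi 0)) :
    Integrable (fun τ => τ ^ (-q)) μ := by
  have hprod : Integrable (fun z : ℝ × ℝ => z.2 ^ (q - 1) * exp (-z.1 * z.2))
      (μ.prod (volume.restrict (Ioi 0))) := by
    refine (integrable_prod_iff' (by fun_prop)).2 ⟨?_, hlaplace.congr ?_⟩
    · filter_upwards [ae_restrict_mem measurableSet_Ioi] with l hl using (hexp l hl).const_mul _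
    · filter_upwards [ae_restrict_mem measurableSet_Ioi] with l (hl : 0 < l)
      rw [← integral_const_mul]
      congr 1 with τ
      exact (norm_of_nonneg (by positivity)).symm
  refine (hprod.integral_prod_left.div_const (Gamma q)).congr ?_
  filter_upwards [hμ] with τ hτ
  have hΓ := Gamma_pos_of_pos hq
  simp only [neg_mul]
  rw [integral_rpow_mul_exp_neg_mul_Ioi hq hτ, mul_div_cancel_right₀ _ hΓ.ne', one_div,
    inv_rpow hτ.le, rpow_neg hτ.le]

/-- The distribution at time `t` of the subordinator with densities `σ`. -/
noncomputable def subordinatorLaw (σ : ℝ → ℝ → ℝ) (t : ℝ) : Measure ℝ :=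
  (volume.restrict (Ioi 0)).withDensity fun τ => ENNReal.ofReal (σ t τ)

instance (σ : ℝ → ℝ → ℝ) (t : ℝ) : SFinite (subordinatorLaw σ t) := by
  unfold subordinatorLaw
  infer_instance

theorem ae_subordinatorLaw_pos (σ : ℝ → ℝ → ℝ) (t : ℝ) : ∀ᵐ τ ∂subordinatorLaw σ t, 0 < τ :=
  (withDensity_absolutelyContinuous _ _).ae_le (ae_restrict_mem measurableSet_Ioi)

namespace IsStableSubordinatorDensity

variable {α t : ℝ} {σ : ℝ → ℝ → ℝ}

theorem integral_subordinatorLaw (hσ : IsStableSubordinatorDensity α σ) (ht : 0 < t) (f : ℝ → ℝ) :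
    ∫ τ, f τ ∂subordinatorLaw σ t = ∫ τ in Ioi 0, f τ * σ t τ := by
  rw [subordinatorLaw, integral_withDensity_eq_integral_toReal_smul
    (hσ.2.1 t ht).ennreal_ofReal (.of_forall fun _ => ENNReal.ofReal_lt_top)]
  refine setIntegral_congr_fun measurableSet_Ioi fun τ hτ => ?_
  rw [ENNReal.toReal_ofReal (hσ.1 t ht τ hτ), smul_eq_mul, mul_comm]

theorem integral_exp_subordinatorLaw (hσ : IsStableSubordinatorDensity α σ) (ht : 0 < t) {l : ℝ}
    (hl : 0 ≤ l) : ∫ τ, exp (-τ * l) ∂subordinatorLaw σ t = exp (-t * l ^ (α / 2)) :=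
  (hσ.integral_subordinatorLaw ht _).trans (hσ.2.2 t l ht hl)

theorem integrable_rpow_neg_subordinatorLaw (hσ : IsStableSubordinatorDensity α σ) (hα : 0 < α)
    (ht : 0 < t) {q : ℝ} (hq : 0 < q) :
    Integrable (fun τ => τ ^ (-q)) (subordinatorLaw σ t) := by
  refine integrable_rpow_neg_of_integrableOn_laplace (ae_subordinatorLaw_pos σ t) hq
    (fun l hl => .of_integral_ne_zero ?_) ?_
  · rw [hσ.integral_exp_subordinatorLaw ht hl.le]
    exact (exp_pos _).ne'
  · refine (integrableOn_rpow_mul_exp_neg_mul_rpow (show -1 < q - 1 by linarith)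
      (half_pos hα) ht).congr_fun (fun l hl => ?_) measurableSet_Ioi
    rw [hσ.integral_exp_subordinatorLaw ht (le_of_lt hl)]

end IsStableSubordinatorDensity

end Subordinator

namespace IsSubordinatedBesselKernel

variable {ζ α t : ℝ} {p : ℝ → ℝ → ℝ → ℝ}

theorem comm (hp : IsSubordinatedBesselKernel ζ α p) (t r s : ℝ) : p t r s = p t s r := by
  rcases hp with ⟨-, hp⟩ | ⟨-, σ, -, hp⟩
  · rw [hp, hp, besselHeat_comm]
  · simp only [hp, subKernel, besselHeat_comm ζ _ r s]

theorem exists_eq_integral_besselHeat (hp : IsSubordinatedBesselKernel ζ α p) (hα : 0 < α)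
    (ht : 0 < t) :
    ∃ μ : Measure ℝ, (∀ᵐ τ ∂μ, 0 < τ) ∧ (∀ q : ℝ, 0 < q → Integrable (fun τ => τ ^ (-q)) μ) ∧
      ∀ r s : ℝ, p t r s = ∫ τ, besselHeat ζ τ r s ∂μ := by
  rcases hp with ⟨-, hp⟩ | ⟨-, σ, hσ, hp⟩
  · refine ⟨Measure.dirac t, ?_, fun q _ => integrable_dirac (by simp), fun r s => ?_⟩
    · rwa [ae_dirac_eq]
    · rw [integral_dirac, hp]
  · exact ⟨subordinatorLaw σ t, ae_subordinatorLaw_pos σ t,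
      fun q hq => hσ.integrable_rpow_neg_subordinatorLaw hα ht hq,
      fun r s => (hp t r s).trans (hσ.integral_subordinatorLaw ht _).symm⟩

theorem exists_le_mul (hp : IsSubordinatedBesselKernel ζ α p) (hζ : -1 / 2 < ζ) (hα : 0 < α)
    (ht : 0 < t) {c x : ℝ} (hc : 0 < c) (hc_sq : 2 * c ^ 2 < 1) (hx : 0 < x) :
    ∃ K : ℝ, 0 < K ∧ ∀ r s : ℝ, 0 < r → r ≤ s → p t x s ≤ K * p t (c * r) (c * s) := by
  obtain ⟨μ, hμ, hmoment, hpμ⟩ := hp.exists_eq_integral_besselHeat hα ht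
  simpa only [hpμ] using exists_integral_besselHeat_le_mul hζ hμ hmoment hc hx hc_sq

end IsSubordinatedBesselKernel

theorem stmt18 (ζ α : ℝ) (hζ : -1/2 < ζ) (hα0 : 0 < α) (hα2 : α ≤ 2)
    (p : ℝ → ℝ → ℝ → ℝ) (hp : IsSubordinatedBesselKernel ζ α p) :
    ∃ c K : ℝ, 0 < c ∧ 0 < K ∧
      (∀ r s : ℝ, 0 < r → r ≤ s → p 1 1 s ≤ K * p 1 (c * r) (c * s)) ∧
      (∀ r s : ℝ, 0 < r → 0 < s → min (p 1 1 r) (p 1 1 s) ≤ K * p 1 (c * r) (c * s)) := by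
  obtain ⟨K, hK, hle⟩ := hp.exists_le_mul hζ hα0 one_pos (c := 1 / 2) (x := 1) (by norm_num)
    (by norm_num) one_pos
  refine ⟨1 / 2, K, by norm_num, hK, hle, fun r s hr hs => ?_⟩
  rcases le_total r s with hrs | hsr
  · exact (min_le_right _ _).trans (hle r s hr hrs)
  · rw [hp.comm 1 (1 / 2 * r)]
    exact (min_le_left _ _).trans (hle s r hs hsr)
end
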